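/- arXiv:0810.3073 — 3 statements merged into one kernel-verified Lean document; each statement's English description precedes it below -/
import Mathlib

section
/- Let K be a measurable complex-valued kernel defined on {(x,y) ∈ ℝⁿ×ℝⁿ : x ≠ y} satisfying, for some γ > 0 and constant C_γ, the Hölder condition |K(x,y) − K(x′,y)| ≤ C_γ |x−x′|^γ / |x−y|^{n+γ} whenever |x−y| > 2|x−x′|. Let B be a ball and f ∈ L^∞(ℝⁿ) with compact support contained in ℝⁿ∖4B, and suppose Tf is a locally integrable function on ℝⁿ such that for almost every x ∈ B the integral ∫ K(x,y) f(y) dy converges absolutely and Tf(x) = ∫ K(x,y) f(y) dy. Then ess sup_{x∈B} |Tf(x)| ≤ C ( ⨍_{2B} |Tf(z)| dz + inf_{x∈B} Mf(x) ), where C depends only on n, γ and C_γ. -/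
/-!
Every `y` in the support of `f` lies outside `4B`, where `B = ball x₀ r`.  If `x ∈ B` and
`x' ∈ ½B`, then `2|x - x'| < 3r ≤ |x - y|`, so the Hölder condition applies to the whole pair
`(x, x')` at once; this is the reason for comparing with `½B` and not with `B`.
Splitting the complement of `4B` into the dyadic shells `4r·2ᵏ ≤ |y - x₀| < 8r·2ᵏ`, the shell `k`
contributes at most `(2^{-γ})^{k+1}` times a constant depending on `n` and `Cγ` times the average
of `|f|` over `ball x₀ (8r·2ᵏ)`.  That ball contains `B`, so the average is at most `inf_B Mf`, and the geometric
series gives `|Tf x - Tf x'| ≤ A · inf_B Mf` (`lintegral_kernel_diff_le`).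
Averaging `|Tf x| ≤ |Tf x'| + A · inf_B Mf` over `x' ∈ ½B`, and using `|2B| = 4ⁿ|½B|`,
gives the claim with `C = 4ⁿ + A`.
-/

open MeasureTheory Metric Set ENNReal
open scoped NNReal

noncomputable section

/-- Euclidean space `ℝⁿ`. -/
abbrev En (n : ℕ) := EuclideanSpace ℝ (Fin n)

/-- The uncentered Hardy–Littlewood maximal function (with values in `ℝ≥0∞`). -/
def maxFn {n : ℕ} (f : En n → ℂ) (x : En n) : ℝ≥0∞ :=
  ⨆ (z : En n) (r : ℝ) (_ : 0 < r) (_ : x ∈ ball z r),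
    (∫⁻ y in ball z r, (‖f y‖₊ : ℝ≥0∞)) / volume (ball z r)

/-- The constant contributed by the `k`-th dyadic shell, without the volume of the unit ball. -/
def shellConst (n : ℕ) (γ : ℝ) (Cγ : ℝ≥0) (k : ℕ) : ℝ :=
  (Cγ : ℝ) * (8 / 3) ^ n * (((1 / 2 : ℝ) ^ γ) ^ (k + 1))

/-- The constant in the oscillation bound: the sum of the contributions of all dyadic shells. -/
def oscConst (n : ℕ) (γ : ℝ) (Cγ : ℝ≥0) : ℝ≥0∞ :=
  (∑' k, ENNReal.ofReal (shellConst n γ Cγ k)) * volume (ball (0 : En n) 1)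

lemma oscConst_ne_top (n : ℕ) {γ : ℝ} (hγ : 0 < γ) (Cγ : ℝ≥0) : oscConst n γ Cγ ≠ ⊤ := by
  have h0 : (0 : ℝ) ≤ (1 / 2 : ℝ) ^ γ := by positivity
  have h1 : (1 / 2 : ℝ) ^ γ < 1 := Real.rpow_lt_one (by norm_num) (by norm_num) hγ
  have hs : Summable (shellConst n γ Cγ) :=
    ((summable_nat_add_iff 1).2 (summable_geometric_of_lt_one h0 h1)).mul_left _
  exact ENNReal.mul_ne_top hs.tsum_ofReal_ne_top measure_ball_lt_top.ne

/-- On the `k`-th shell `|x - y| ≥ 3r·2ᵏ`, so the Hölder bound there times the `n`-th power of the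
radius `8r·2ᵏ` is a quantity independent of `r`. -/
lemma shell_identity (n : ℕ) (γ : ℝ) (Cγ : ℝ≥0) (k : ℕ) {r : ℝ} (hr : 0 < r) :
    (Cγ : ℝ) * (3 / 2 * r) ^ γ / (3 * r * 2 ^ k) ^ ((n : ℝ) + γ) * (8 * r * 2 ^ k) ^ n
      = shellConst n γ Cγ k := by
  have hp : (0 : ℝ) < 3 * r * 2 ^ k := by positivity
  have e1 : 3 / 2 * r = (3 * r * 2 ^ k) * (1 / 2) ^ (k + 1) := by
    rw [div_pow, pow_succ]; field_simp; ring
  have e2 : 8 * r * 2 ^ k = (3 * r * 2 ^ k) * (8 / 3) := by ring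
  have e3 : ((1 / 2 : ℝ) ^ (k + 1)) ^ γ = ((1 / 2 : ℝ) ^ γ) ^ (k + 1) := by
    rw [← Real.rpow_natCast, ← Real.rpow_natCast, ← Real.rpow_mul (by norm_num),
      ← Real.rpow_mul (by norm_num), mul_comm]
  rw [e1, e2, Real.mul_rpow hp.le (by positivity), e3, Real.rpow_add hp, Real.rpow_natCast,
    mul_pow _ (8 / 3 : ℝ), shellConst]
  have := Real.rpow_pos_of_pos hp γ
  generalize 3 * r * 2 ^ k = P at hp this ⊢
  field_simp

lemma average_le_iInf_maxFn {n : ℕ} (f : En n → ℂ) (x₀ : En n) {r R : ℝ} (hr : 0 < r)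
    (hR : r ≤ R) :
    (∫⁻ y in ball x₀ R, (‖f y‖₊ : ℝ≥0∞)) / volume (ball x₀ R)
      ≤ ⨅ x ∈ ball x₀ r, maxFn f x := by
  refine le_iInf₂ fun x hx => ?_
  unfold maxFn
  exact le_iSup₂_of_le x₀ R
    (le_iSup₂_of_le (hr.trans_le hR) (ball_subset_ball hR hx) le_rfl)

lemma volume_ball_eq {n : ℕ} (x : En n) {r : ℝ} (hr : 0 < r) :
    volume (ball x r) = ENNReal.ofReal (r ^ n) * volume (ball (0 : En n) 1) := by
  rw [Measure.addHaar_ball_of_pos _ _ hr, finrank_euclideanSpace_fin]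

/-- Oscillation bound for the kernel between a point of `B` and a point of `½B`. -/
lemma lintegral_kernel_diff_le {n : ℕ} {γ : ℝ} (hγ : 0 < γ) {Cγ : ℝ≥0} {K : En n → En n → ℂ}
    (hK : ∀ x x' y : En n, 2 * dist x x' < dist x y →
        ‖K x y - K x' y‖ ≤ (Cγ : ℝ) * dist x x' ^ γ / dist x y ^ ((n : ℝ) + γ))
    {x₀ : En n} {r : ℝ} (hr : 0 < r) {f : En n → ℂ} (hf : Measurable f)
    (hsupp : Function.support f ⊆ (ball x₀ (4 * r))ᶜ)
    {x x' : En n} (hx : x ∈ ball x₀ r) (hx' : x' ∈ ball x₀ (r / 2)) :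
    ∫⁻ y, ‖K x y * f y - K x' y * f y‖ₑ
      ≤ oscConst n γ Cγ * ⨅ x ∈ ball x₀ r, maxFn f x := by
  set m := ⨅ x ∈ ball x₀ r, maxFn f x
  let c : ℕ → ℝ := fun k => (Cγ : ℝ) * (3 / 2 * r) ^ γ / (3 * r * 2 ^ k) ^ ((n : ℝ) + γ)
  have hc : ∀ k, 0 ≤ c k := fun k => by positivity
  let S : ℕ → Set (En n) := fun k => ball x₀ (8 * r * 2 ^ k)
  have hxx : dist x x' < 3 / 2 * r := by
    have := dist_triangle_right x x' x₀
    rw [mem_ball] at hx hx'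
    linarith
  have hpt : ∀ y, ‖K x y * f y - K x' y * f y‖ₑ
      ≤ ∑' k, ENNReal.ofReal (c k) * (S k).indicator (fun y => (‖f y‖₊ : ℝ≥0∞)) y := by
    intro y
    by_cases hy : f y = 0
    · simp [hy]
    have hy4 : 4 * r ≤ dist y x₀ := by
      have := hsupp hy
      simpa using this
    -- the index of the dyadic shell containing `y`
    obtain ⟨k, hk1, hk2⟩ := exists_nat_pow_near (x := dist y x₀ / (4 * r)) (y := 2)
      (by rw [le_div_iff₀ (by positivity)]; linarith) (by norm_num)
    rw [le_div_iff₀ (by positivity)] at hk1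
    rw [div_lt_iff₀ (by positivity), pow_succ] at hk2
    have h2k : (1 : ℝ) ≤ 2 ^ k := one_le_pow₀ (by norm_num)
    have hxy : 3 * r * 2 ^ k ≤ dist x y := by
      have := dist_triangle_left y x₀ x
      rw [mem_ball] at hx
      nlinarith
    have hyS : y ∈ S k := by
      simp only [S, mem_ball]; linarith
    refine le_trans ?_ (ENNReal.le_tsum k)
    rw [indicator_of_mem hyS, ← sub_mul, enorm_mul]
    refine mul_le_mul_left ?_ _
    rw [← ofReal_norm]
    refine ENNReal.ofReal_le_ofReal ((hK x x' y (by nlinarith)).trans ?_)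
    simp only [c]
    gcongr
  have hterm : ∀ k, ENNReal.ofReal (c k) * ∫⁻ y in S k, (‖f y‖₊ : ℝ≥0∞)
      ≤ ENNReal.ofReal (shellConst n γ Cγ k) * volume (ball (0 : En n) 1) * m := by
    intro k
    have hR : 0 < 8 * r * 2 ^ k := by positivity
    have h2k : (1 : ℝ) ≤ 2 ^ k := one_le_pow₀ (by norm_num)
    have hav : (∫⁻ y in S k, (‖f y‖₊ : ℝ≥0∞)) ≤ m * volume (S k) := by
      have h := average_le_iInf_maxFn f x₀ hr (R := 8 * r * 2 ^ k) (by nlinarith)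
      rwa [ENNReal.div_le_iff (measure_ball_pos _ _ hR).ne' measure_ball_lt_top.ne] at h
    calc ENNReal.ofReal (c k) * ∫⁻ y in S k, (‖f y‖₊ : ℝ≥0∞)
        ≤ ENNReal.ofReal (c k) * (m * volume (S k)) := by gcongr
      _ = (ENNReal.ofReal (c k) * ENNReal.ofReal ((8 * r * 2 ^ k) ^ n))
            * volume (ball (0 : En n) 1) * m := by
          simp only [S]; rw [volume_ball_eq _ hR]; ring
      _ = _ := by rw [← ENNReal.ofReal_mul (hc k), shell_identity n γ Cγ k hr]
  have hfm : Measurable fun y => (‖f y‖₊ : ℝ≥0∞) := hf.nnnorm.coe_nnreal_ennreal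
  have hSm : ∀ k, MeasurableSet (S k) := fun k => measurableSet_ball
  calc ∫⁻ y, ‖K x y * f y - K x' y * f y‖ₑ
      ≤ ∫⁻ y, ∑' k, ENNReal.ofReal (c k) * (S k).indicator (fun y => (‖f y‖₊ : ℝ≥0∞)) y :=
        lintegral_mono hpt
    _ = ∑' k, ENNReal.ofReal (c k) * ∫⁻ y in S k, (‖f y‖₊ : ℝ≥0∞) := by
        rw [lintegral_tsum fun k => ((hfm.indicator (hSm k)).const_mul _).aemeasurable]
        congr 1 with k
        rw [lintegral_const_mul _ (hfm.indicator (hSm k)), lintegral_indicator (hSm k)]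
    _ ≤ ∑' k, ENNReal.ofReal (shellConst n γ Cγ k) * volume (ball (0 : En n) 1) * m :=
        ENNReal.tsum_le_tsum hterm
    _ = oscConst n γ Cγ * m := by
        rw [ENNReal.tsum_mul_right, ENNReal.tsum_mul_right, oscConst]

/-- Hölder regularity of the kernel in the first variable implies the
`L^∞`-on-`B` control of `Tf` for `f` supported away from `4B`; the constant depends only on
`n`, `γ` and `C_γ`. -/
theorem statement7
    (n : ℕ) (γ : ℝ) (hγ : 0 < γ) (Cγ : ℝ≥0) :
    ∃ C : ℝ≥0, ∀ K : En n → En n → ℂ,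
      Measurable (fun p : En n × En n => K p.1 p.2) →
      -- Hölder condition in the first variable
      (∀ x x' y : En n, 2 * dist x x' < dist x y →
        ‖K x y - K x' y‖ ≤ (Cγ : ℝ) * dist x x' ^ γ / dist x y ^ ((n : ℝ) + γ)) →
      ∀ (x₀ : En n) (r : ℝ), 0 < r → ∀ f : En n → ℂ,
        Measurable f → (∃ M : ℝ, ∀ y, ‖f y‖ ≤ M) → HasCompactSupport f →
        Function.support f ⊆ (ball x₀ (4 * r))ᶜ →
        ∀ Tf : En n → ℂ, LocallyIntegrable Tf volume →
          (∀ᵐ x ∂volume.restrict (ball x₀ r),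
            Integrable (fun y => K x y * f y) volume ∧
            Tf x = ∫ y, K x y * f y) →
          essSup (fun x => (‖Tf x‖₊ : ℝ≥0∞)) (volume.restrict (ball x₀ r))
            ≤ (C : ℝ≥0∞) *
              ((∫⁻ z in ball x₀ (2 * r), (‖Tf z‖₊ : ℝ≥0∞)) / volume (ball x₀ (2 * r))
                + ⨅ x ∈ ball x₀ r, maxFn f x) := by
  refine ⟨4 ^ n + (oscConst n γ Cγ).toNNReal, ?_⟩
  intro K _ hK x₀ r hr f hf _ _ hsupp Tf _ hae
  set m := ⨅ x ∈ ball x₀ r, maxFn f x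
  have hA : ((oscConst n γ Cγ).toNNReal : ℝ≥0∞) = oscConst n γ Cγ :=
    ENNReal.coe_toNNReal (oscConst_ne_top n hγ Cγ)
  set A := oscConst n γ Cγ
  have hhalf : ball x₀ (r / 2) ⊆ ball x₀ r := ball_subset_ball (by linarith)
  have hae' := ae_restrict_of_ae_restrict_of_subset hhalf hae
  refine essSup_le_of_ae_le _ ?_
  filter_upwards [hae, ae_restrict_mem measurableSet_ball] with x ⟨hxi, hxT⟩ hx
  have hosc : ∀ᵐ x' ∂volume.restrict (ball x₀ (r / 2)),
      (‖Tf x‖₊ : ℝ≥0∞) ≤ ‖Tf x'‖₊ + A * m := by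
    filter_upwards [hae', ae_restrict_mem measurableSet_ball] with x' ⟨hxi', hxT'⟩ hx'
    have hd : ‖Tf x - Tf x'‖ₑ ≤ A * m := by
      rw [hxT, hxT', ← integral_sub hxi hxi']
      exact (enorm_integral_le_lintegral_enorm _).trans
        (lintegral_kernel_diff_le hγ hK hr hf hsupp hx hx')
    calc ‖Tf x‖ₑ = ‖Tf x' + (Tf x - Tf x')‖ₑ := by rw [add_sub_cancel]
      _ ≤ ‖Tf x'‖ₑ + ‖Tf x - Tf x'‖ₑ := enorm_add_le _ _
      _ ≤ _ := by gcongr; rfl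
  have hr2 : 0 < r / 2 := by positivity
  set V := volume (ball x₀ (r / 2))
  have hV0 : V ≠ 0 := (measure_ball_pos _ _ hr2).ne'
  have hVt : V ≠ ⊤ := measure_ball_lt_top.ne
  set I := ∫⁻ z in ball x₀ (2 * r), (‖Tf z‖₊ : ℝ≥0∞)
  have hint : (‖Tf x‖₊ : ℝ≥0∞) * V ≤ I + A * m * V := by
    calc (‖Tf x‖₊ : ℝ≥0∞) * V = ∫⁻ _ in ball x₀ (r / 2), (‖Tf x‖₊ : ℝ≥0∞) := by
          rw [setLIntegral_const]
      _ ≤ ∫⁻ x' in ball x₀ (r / 2), ((‖Tf x'‖₊ : ℝ≥0∞) + A * m) := lintegral_mono_ae hosc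
      _ = (∫⁻ x' in ball x₀ (r / 2), (‖Tf x'‖₊ : ℝ≥0∞)) + A * m * V := by
          rw [lintegral_add_right _ measurable_const, setLIntegral_const]
      _ ≤ I + A * m * V := by
          gcongr
          exact lintegral_mono_set (ball_subset_ball (by linarith))
  have hvol : volume (ball x₀ (2 * r)) = 4 ^ n * V := by
    simp only [V]
    rw [volume_ball_eq _ hr2, volume_ball_eq _ (by positivity : 0 < 2 * r), ← mul_assoc]
    congr 1
    rw [show 2 * r = 4 * (r / 2) by ring, mul_pow, ENNReal.ofReal_mul (by positivity),
      ENNReal.ofReal_pow (by norm_num)]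
    norm_num
  have h4t : (4 : ℝ≥0∞) ^ n ≠ ⊤ := ENNReal.pow_ne_top (by norm_num)
  have hIV : I / V = 4 ^ n * (I / volume (ball x₀ (2 * r))) := by
    rw [hvol, ← mul_div_assoc, ENNReal.mul_div_mul_left _ _ (by simp) h4t]
  calc (‖Tf x‖₊ : ℝ≥0∞) ≤ (I + A * m * V) / V := by
        rwa [ENNReal.le_div_iff_mul_le (Or.inl hV0) (Or.inl hVt)]
    _ = 4 ^ n * (I / volume (ball x₀ (2 * r))) + A * m := by
        rw [ENNReal.add_div, hIV, ENNReal.mul_div_cancel_right hV0 hVt]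
    _ ≤ (4 ^ n + A) * (I / volume (ball x₀ (2 * r))) + (4 ^ n + A) * m := by
        gcongr
        · exact le_self_add
        · exact le_add_self
    _ = _ := by
        rw [← mul_add]
        push_cast
        rw [hA]
end
end

section
/- Let K be a measurable complex-valued kernel defined on {(x,y) ∈ ℝⁿ×ℝⁿ : x ≠ y} satisfying, for some γ > 0 and constant C_γ, the Hölder condition in the second variable |K(x,y) − K(x,y′)| ≤ C_γ |y−y′|^γ / |x−y|^{n+γ} whenever |x−y| > 2|y−y′|, and let w ∈ A₁. Then there is a constant C, depending only on n, γ, C_γ and the A₁ constant of w, such that for every ball B and every bounded measurable function f supported in B with ∫_B f dx = 0: for almost every x ∈ ℝⁿ∖4B the integral Tf(x) = ∫_B K(x,y) f(y) dy converges absolutely, and ∫_{ℝⁿ∖4B} |Tf(x)| w(x) dx ≤ C ∫_B |f(x)| w(x) dx. -/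
/-!
For `x ∉ 4B` and `y ∈ B = ball x₀ r` the Hölder condition applies with base point `x₀`, so `K x` is
bounded on `B` and, since `f` has mean zero,
`‖Tf x‖ ≤ (∫_B ‖f‖) * Cγ r ^ γ / dist x x₀ ^ (n + γ)` (`norm_integral_kernel_le`).
It remains to bound `I = ∫_{(4B)ᶜ} Cγ r ^ γ / dist x x₀ ^ (n + γ) * w x` by a constant multiple of
`w y` for a.e. `y ∈ B` (`lintegral_tail_le`): on the dyadic annulus of inner radius `2 ^ (k + 2) r`
the `A₁` condition on the ball of radius `2 ^ (k + 3) r`, which contains `B`, gives a contribution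
of order `2 ^ (-γ k) * w y`, and these sum geometrically. Multiplying by `‖f y‖` and integrating
over `B` yields the estimate.
-/

open MeasureTheory Metric Set ENNReal
open scoped NNReal

noncomputable section

/-- The constant in the tail estimate: the sum of the geometric series over dyadic annuli. -/
def tailConst (n : ℕ) (γ : ℝ) (Cγ Cw : ℝ≥0) : ℝ≥0∞ :=
  ENNReal.ofReal (Cγ * 2 ^ n) * volume (ball (0 : En n) 1) * Cw *
    (1 - ENNReal.ofReal ((2 : ℝ) ^ (-γ)))⁻¹

lemma tailConst_ne_top (n : ℕ) {γ : ℝ} (hγ : 0 < γ) (Cγ Cw : ℝ≥0) :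
    tailConst n γ Cγ Cw ≠ ⊤ := by
  have h1 : ENNReal.ofReal ((2 : ℝ) ^ (-γ)) < 1 := by
    rw [ENNReal.ofReal_lt_one]
    exact Real.rpow_lt_one_of_one_lt_of_neg (by norm_num) (by linarith)
  have h2 : (1 - ENNReal.ofReal ((2 : ℝ) ^ (-γ)))⁻¹ ≠ ⊤ :=
    ENNReal.inv_ne_top.2 (tsub_pos_of_lt h1).ne'
  exact ENNReal.mul_ne_top (ENNReal.mul_ne_top (ENNReal.mul_ne_top ENNReal.ofReal_ne_top
    measure_ball_lt_top.ne) ENNReal.coe_ne_top) h2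

/-- The kernel bound at distance `2 ^ (k + 2) r`, times the `n`-th power of the doubled radius,
decays geometrically in `k`. -/
lemma annulus_const_le (n : ℕ) {γ : ℝ} (hγ : 0 < γ) (Cγ : ℝ≥0) {r : ℝ} (hr : 0 < r) (k : ℕ) :
    (Cγ : ℝ) * r ^ γ / ((2 : ℝ) ^ (k + 2) * r) ^ ((n : ℝ) + γ) * ((2 : ℝ) ^ (k + 3) * r) ^ n
      ≤ Cγ * 2 ^ n * ((2 : ℝ) ^ (-γ)) ^ k := by
  have hR : 0 < (2 : ℝ) ^ (k + 2) := by positivity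
  have hrγ : r ^ γ ≠ 0 := (Real.rpow_pos_of_pos hr γ).ne'
  have hRγ : ((2 : ℝ) ^ (k + 2)) ^ γ ≠ 0 := (Real.rpow_pos_of_pos hR γ).ne'
  have e1 : (2 : ℝ) ^ (k + 3) * r = 2 * ((2 : ℝ) ^ (k + 2) * r) := by ring
  have e2 : (Cγ : ℝ) * r ^ γ / ((2 : ℝ) ^ (k + 2) * r) ^ ((n : ℝ) + γ) *
      ((2 : ℝ) ^ (k + 3) * r) ^ n = Cγ * 2 ^ n * (((2 : ℝ) ^ (k + 2)) ^ γ)⁻¹ := by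
    have hne : ((2 : ℝ) ^ (k + 2) * r) ^ n ≠ 0 := by positivity
    rw [e1, mul_pow 2, Real.rpow_add (by positivity), Real.rpow_natCast,
      Real.mul_rpow hR.le hr.le]
    field_simp
  rw [e2]
  have e3 : (((2 : ℝ) ^ (k + 2)) ^ γ)⁻¹ ≤ ((2 : ℝ) ^ (-γ)) ^ k := by
    rw [← Real.rpow_neg hR.le, ← Real.rpow_natCast 2 (k + 2), ← Real.rpow_natCast _ k,
      ← Real.rpow_mul (by norm_num), ← Real.rpow_mul (by norm_num)]
    apply Real.rpow_le_rpow_of_exponent_le (by norm_num)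
    push_cast
    nlinarith
  exact mul_le_mul_of_nonneg_left e3 (by positivity)

/-- The weighted tail of the Hölder bound is controlled by the value of the `A₁` weight at almost
every point of the ball. -/
lemma lintegral_tail_le (n : ℕ) {γ : ℝ} (hγ : 0 < γ) (Cγ Cw : ℝ≥0) (w : En n → ℝ)
    (hA : ∀ (x : En n) (r : ℝ), 0 < r → ∀ᵐ y ∂volume.restrict (ball x r),
        (∫⁻ z in ball x r, ENNReal.ofReal (w z)) / volume (ball x r)
          ≤ (Cw : ℝ≥0∞) * ENNReal.ofReal (w y))
    (x₀ : En n) {r : ℝ} (hr : 0 < r) :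
    ∀ᵐ y ∂volume.restrict (ball x₀ r),
      ∫⁻ x in (ball x₀ (4 * r))ᶜ,
        ENNReal.ofReal ((Cγ : ℝ) * r ^ γ / dist x x₀ ^ ((n : ℝ) + γ)) * ENNReal.ofReal (w x)
        ≤ tailConst n γ Cγ Cw * ENNReal.ofReal (w y) := by
  have hAk : ∀ᵐ y ∂volume.restrict (ball x₀ r), ∀ k : ℕ,
      (∫⁻ z in ball x₀ ((2 : ℝ) ^ (k + 3) * r), ENNReal.ofReal (w z)) /
        volume (ball x₀ ((2 : ℝ) ^ (k + 3) * r)) ≤ (Cw : ℝ≥0∞) * ENNReal.ofReal (w y) := by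
    rw [ae_all_iff]
    intro k
    have h1 : (1 : ℝ) ≤ 2 ^ (k + 3) := one_le_pow₀ (by norm_num)
    exact ae_restrict_of_ae_restrict_of_subset
      (ball_subset_ball (by nlinarith)) (hA x₀ ((2 : ℝ) ^ (k + 3) * r) (by positivity))
  filter_upwards [hAk] with y hy
  set S : ℕ → Set (En n) := fun k =>
    ball x₀ ((2 : ℝ) ^ (k + 3) * r) \ ball x₀ ((2 : ℝ) ^ (k + 2) * r) with hS
  have hcover : (ball x₀ (4 * r))ᶜ ⊆ ⋃ k, S k := by
    intro x hx
    simp only [mem_compl_iff, mem_ball, not_lt] at hx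
    obtain ⟨m, hm1, hm2⟩ := exists_nat_pow_near (x := dist x x₀ / (4 * r)) (y := 2)
      ((one_le_div (by positivity)).2 hx) (by norm_num)
    rw [le_div_iff₀ (by positivity)] at hm1
    rw [div_lt_iff₀ (by positivity)] at hm2
    refine mem_iUnion.2 ⟨m, ?_, ?_⟩
    · simp only [mem_ball]
      calc _ < _ := hm2
        _ = _ := by ring
    · simp only [mem_ball, not_lt]
      calc _ = _ := by ring
        _ ≤ _ := hm1
  have hSm : ∀ k, MeasurableSet (S k) := fun k => measurableSet_ball.diff measurableSet_ball
  have hann : ∀ k, ∫⁻ x in S k,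
      ENNReal.ofReal ((Cγ : ℝ) * r ^ γ / dist x x₀ ^ ((n : ℝ) + γ)) * ENNReal.ofReal (w x)
      ≤ ENNReal.ofReal (Cγ * 2 ^ n) * volume (ball (0 : En n) 1) * Cw * ENNReal.ofReal (w y) *
        ENNReal.ofReal ((2 : ℝ) ^ (-γ)) ^ k := by
    intro k
    set c : ℝ := (Cγ : ℝ) * r ^ γ / ((2 : ℝ) ^ (k + 2) * r) ^ ((n : ℝ) + γ) with hc
    have hc0 : 0 ≤ c := by positivity
    set V := volume (ball x₀ ((2 : ℝ) ^ (k + 3) * r)) with hV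
    have hV0 : V ≠ 0 := (measure_ball_pos _ _ (by positivity)).ne'
    have hVt : V ≠ ⊤ := measure_ball_lt_top.ne
    have hVe : V = ENNReal.ofReal (((2 : ℝ) ^ (k + 3) * r) ^ n) * volume (ball (0 : En n) 1) := by
      rw [hV, Measure.addHaar_ball_of_pos _ _ (by positivity)]
      simp
    have hwB : ∫⁻ z in ball x₀ ((2 : ℝ) ^ (k + 3) * r), ENNReal.ofReal (w z)
        ≤ Cw * ENNReal.ofReal (w y) * V :=
      (ENNReal.div_le_iff hV0 hVt).1 (hy k)
    calc ∫⁻ x in S k,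
          ENNReal.ofReal ((Cγ : ℝ) * r ^ γ / dist x x₀ ^ ((n : ℝ) + γ)) * ENNReal.ofReal (w x)
        ≤ ∫⁻ x in S k, ENNReal.ofReal c * ENNReal.ofReal (w x) := by
          refine setLIntegral_mono' (hSm k) fun x hx => ?_
          have hx2 : (2 : ℝ) ^ (k + 2) * r ≤ dist x x₀ := by simpa using hx.2
          refine mul_le_mul_left (ENNReal.ofReal_le_ofReal ?_) _
          rw [hc]
          gcongr
      _ = ENNReal.ofReal c * ∫⁻ x in S k, ENNReal.ofReal (w x) :=
          lintegral_const_mul' _ _ ENNReal.ofReal_ne_top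
      _ ≤ ENNReal.ofReal c * (Cw * ENNReal.ofReal (w y) * V) := by
          gcongr
          exact (lintegral_mono_set sdiff_subset).trans hwB
      _ = ENNReal.ofReal (c * ((2 : ℝ) ^ (k + 3) * r) ^ n) * volume (ball (0 : En n) 1) * Cw *
            ENNReal.ofReal (w y) := by
          rw [hVe, ENNReal.ofReal_mul hc0]; ring
      _ ≤ ENNReal.ofReal (Cγ * 2 ^ n * ((2 : ℝ) ^ (-γ)) ^ k) * volume (ball (0 : En n) 1) * Cw *
            ENNReal.ofReal (w y) := by
          exact mul_le_mul_left (mul_le_mul_left (mul_le_mul_left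
            (ENNReal.ofReal_le_ofReal (annulus_const_le n hγ Cγ hr k)) _) _) _
      _ = _ := by
          rw [ENNReal.ofReal_mul (by positivity), ENNReal.ofReal_pow (by positivity)]; ring
  calc _ ≤ ∫⁻ x in ⋃ k, S k,
          ENNReal.ofReal ((Cγ : ℝ) * r ^ γ / dist x x₀ ^ ((n : ℝ) + γ)) * ENNReal.ofReal (w x) :=
        lintegral_mono_set hcover
    _ ≤ ∑' k, ∫⁻ x in S k,
          ENNReal.ofReal ((Cγ : ℝ) * r ^ γ / dist x x₀ ^ ((n : ℝ) + γ)) * ENNReal.ofReal (w x) :=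
        lintegral_iUnion_le _ _
    _ ≤ ∑' k : ℕ, ENNReal.ofReal (Cγ * 2 ^ n) * volume (ball (0 : En n) 1) * Cw *
          ENNReal.ofReal (w y) * ENNReal.ofReal ((2 : ℝ) ^ (-γ)) ^ k := ENNReal.tsum_le_tsum hann
    _ = _ := by
        rw [ENNReal.tsum_mul_left, ENNReal.tsum_geometric, tailConst]; ring

/-- Off `4B` the integral defining `Tf` converges absolutely, and cancellation gives the decay
`‖Tf x‖ ≤ (∫_B ‖f‖) * Cγ r ^ γ / dist x x₀ ^ (n + γ)`. -/
lemma norm_integral_kernel_le {n : ℕ} {γ : ℝ} (hγ : 0 < γ) {Cγ : ℝ≥0} {K : En n → En n → ℂ}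
    (hKm : Measurable (fun p : En n × En n => K p.1 p.2))
    (hK : ∀ x y y' : En n, 2 * dist y y' < dist x y →
        ‖K x y - K x y'‖ ≤ (Cγ : ℝ) * dist y y' ^ γ / dist x y ^ ((n : ℝ) + γ))
    {x₀ : En n} {r : ℝ} (hr : 0 < r) {f : En n → ℂ} (hf : Measurable f)
    (hfb : ∃ M : ℝ, ∀ y, ‖f y‖ ≤ M) (hf0 : (∫ y in ball x₀ r, f y) = 0)
    {x : En n} (hx : x ∉ ball x₀ (4 * r)) :
    IntegrableOn (fun y => K x y * f y) (ball x₀ r) volume ∧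
      (‖∫ y in ball x₀ r, K x y * f y‖₊ : ℝ≥0∞) ≤
        (∫⁻ y in ball x₀ r, (‖f y‖₊ : ℝ≥0∞)) *
          ENNReal.ofReal ((Cγ : ℝ) * r ^ γ / dist x x₀ ^ ((n : ℝ) + γ)) := by
  obtain ⟨M, hM⟩ := hfb
  simp only [mem_ball, not_lt] at hx
  set D : ℝ := (Cγ : ℝ) * r ^ γ / dist x x₀ ^ ((n : ℝ) + γ) with hD
  have hdiff : ∀ y ∈ ball x₀ r, ‖K x y - K x x₀‖ ≤ D := by
    intro y hy
    have hy' : dist x₀ y < r := by simpa [dist_comm] using hy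
    rw [norm_sub_rev]
    refine (hK x x₀ y (by linarith)).trans ?_
    rw [hD]
    gcongr
  have hKx : Measurable (fun y => K x y) := hKm.comp measurable_prodMk_left
  have hfi : IntegrableOn f (ball x₀ r) volume :=
    Measure.integrableOn_of_bounded measure_ball_lt_top.ne hf.aestronglyMeasurable
      (Filter.Eventually.of_forall hM)
  have hdi : IntegrableOn (fun y => (K x y - K x x₀) * f y) (ball x₀ r) volume :=
    Integrable.bdd_mul hfi (hKx.sub_const _).aestronglyMeasurable
      ((ae_restrict_iff' measurableSet_ball).2 (Filter.Eventually.of_forall hdiff))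
  have hci : IntegrableOn (fun y => K x x₀ * f y) (ball x₀ r) volume := hfi.const_mul _
  have hsum : (fun y => K x y * f y) = fun y => (K x y - K x x₀) * f y + K x x₀ * f y := by
    funext y; ring
  refine ⟨hsum ▸ hdi.add hci, ?_⟩
  have h_int : ∫ y in ball x₀ r, K x y * f y = ∫ y in ball x₀ r, (K x y - K x x₀) * f y := by
    rw [hsum, integral_add hdi hci, integral_const_mul, hf0, mul_zero, add_zero]
  rw [h_int]
  calc _ ≤ ∫⁻ y in ball x₀ r, ‖(K x y - K x x₀) * f y‖ₑ := enorm_integral_le_lintegral_enorm _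
    _ ≤ ∫⁻ y in ball x₀ r, (‖f y‖₊ : ℝ≥0∞) * ENNReal.ofReal D := by
        refine setLIntegral_mono' measurableSet_ball fun y hy => ?_
        rw [enorm_mul, mul_comm]
        refine mul_le_mul_right ?_ _
        rw [← ofReal_norm]
        exact ENNReal.ofReal_le_ofReal (hdiff y hy)
    _ = _ := lintegral_mul_const' _ _ ENNReal.ofReal_ne_top

/-- Hölder regularity of the kernel in the second variable together with `w ∈ A₁`
gives the weighted cancellation estimate `∫_{ℝⁿ∖4B} |Tf| w ≤ C ∫_B |f| w` for mean-zero bounded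
`f` supported in `B`; the constant depends only on `n`, `γ`, `C_γ` and the `A₁` constant of `w`. -/
theorem statement8
    (n : ℕ) (γ : ℝ) (hγ : 0 < γ) (Cγ : ℝ≥0) (Cw : ℝ≥0) :
    ∃ C : ℝ≥0, ∀ K : En n → En n → ℂ,
      Measurable (fun p : En n × En n => K p.1 p.2) →
      -- Hölder condition in the second variable
      (∀ x y y' : En n, 2 * dist y y' < dist x y →
        ‖K x y - K x y'‖ ≤ (Cγ : ℝ) * dist y y' ^ γ / dist x y ^ ((n : ℝ) + γ)) →
      ∀ w : En n → ℝ, (∀ x, 0 ≤ w x) → LocallyIntegrable w volume →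
      -- w ∈ A₁ with constant Cw
      (∀ (x : En n) (r : ℝ), 0 < r → ∀ᵐ y ∂volume.restrict (ball x r),
        (∫⁻ z in ball x r, ENNReal.ofReal (w z)) / volume (ball x r)
          ≤ (Cw : ℝ≥0∞) * ENNReal.ofReal (w y)) →
      ∀ (x₀ : En n) (r : ℝ), 0 < r → ∀ f : En n → ℂ,
        Measurable f → (∃ M : ℝ, ∀ y, ‖f y‖ ≤ M) → Function.support f ⊆ ball x₀ r →
        (∫ y in ball x₀ r, f y) = 0 →
        -- absolute convergence a.e. outside 4B
        (∀ᵐ x, x ∉ ball x₀ (4 * r) →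
          IntegrableOn (fun y => K x y * f y) (ball x₀ r) volume) ∧
        -- the weighted L¹ estimate outside 4B
        (∫⁻ x in (ball x₀ (4 * r))ᶜ,
            (‖∫ y in ball x₀ r, K x y * f y‖₊ : ℝ≥0∞) * ENNReal.ofReal (w x))
          ≤ (C : ℝ≥0∞) * ∫⁻ x in ball x₀ r, (‖f x‖₊ : ℝ≥0∞) * ENNReal.ofReal (w x) := by
  have hCtop := tailConst_ne_top n hγ Cγ Cw
  refine ⟨(tailConst n γ Cγ Cw).toNNReal, ?_⟩
  intro K hKm hK w _ _ hA x₀ r hr f hf hfb _ hf0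
  refine ⟨Filter.Eventually.of_forall fun x hx =>
    (norm_integral_kernel_le hγ hKm hK hr hf hfb hf0 hx).1, ?_⟩
  rw [ENNReal.coe_toNNReal hCtop]
  set A : ℝ≥0∞ := ∫⁻ y in ball x₀ r, (‖f y‖₊ : ℝ≥0∞) with hAdef
  have hAt : A ≠ ⊤ := by
    obtain ⟨M, hM⟩ := hfb
    have hfi : IntegrableOn f (ball x₀ r) volume :=
      Measure.integrableOn_of_bounded measure_ball_lt_top.ne hf.aestronglyMeasurable
        (Filter.Eventually.of_forall hM)
    exact hfi.2.ne
  set D : En n → ℝ≥0∞ := fun x =>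
    ENNReal.ofReal ((Cγ : ℝ) * r ^ γ / dist x x₀ ^ ((n : ℝ) + γ)) with hD
  calc _ ≤ ∫⁻ x in (ball x₀ (4 * r))ᶜ, A * (D x * ENNReal.ofReal (w x)) := by
        refine setLIntegral_mono' measurableSet_ball.compl fun x hx => ?_
        rw [← mul_assoc]
        gcongr
        exact (norm_integral_kernel_le hγ hKm hK hr hf hfb hf0 hx).2
    _ = A * ∫⁻ x in (ball x₀ (4 * r))ᶜ, D x * ENNReal.ofReal (w x) :=
        lintegral_const_mul' _ _ hAt
    _ = ∫⁻ y in ball x₀ r, (‖f y‖₊ : ℝ≥0∞) *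
          ∫⁻ x in (ball x₀ (4 * r))ᶜ, D x * ENNReal.ofReal (w x) :=
        (lintegral_mul_const _ hf.nnnorm.coe_nnreal_ennreal).symm
    _ ≤ ∫⁻ y in ball x₀ r, tailConst n γ Cγ Cw *
          ((‖f y‖₊ : ℝ≥0∞) * ENNReal.ofReal (w y)) := by
        refine lintegral_mono_ae ?_
        filter_upwards [lintegral_tail_le n hγ Cγ Cw w hA x₀ hr] with y hy
        rw [mul_left_comm]
        gcongr
    _ = _ := lintegral_const_mul' _ _ hCtop

end
end

section
/- Let w ∈ A_∞ and 1 ≤ p₀ < q₀ ≤ ∞. If the set W_w(p₀,q₀) is nonempty, then W_w(p₀,q₀) is exactly the open interval (p₀ r_w, q₀/(s_w)′), where (s_w)′ = s_w/(s_w − 1) (interpreted as 1 when s_w = ∞), and q₀/(s_w)′ is interpreted as ∞ when q₀ = ∞. -/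
/-!
For `p > p₀` (and `p < q₀`) membership `p ∈ W_w(p₀,q₀)` means `w ∈ A_{p/p₀}` and
`w ∈ RH_{(q₀/p)'}`. Both classes are monotone in the exponent by Jensen's inequality
(`MemA.mono`, `MemRH.mono`, `MemRHe.memRH_of_lt`), so each condition holds strictly on the inner
side of its critical exponent, `r_w` or `s_w`. What has to be shown is that the critical exponents
themselves are not attained, i.e. that the classes are open: `w ∈ A_s` with `s > 1` gives
`w ∈ A_{s'}` for some `1 < s' < s` (`MemA.exists_lt`), and `w ∈ A_∞ ∩ RH_s` gives `w ∈ RH_{s'}` for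
some `s' > s` (`MemRH.exists_gt`). Then `p/p₀ > r_w` and `(q₀/p)' < s_w` are exactly the two
conditions, and solving for `p` gives the interval (`lt_div_sWconj_iff`). Nonemptiness is used only
to know that `s_w > 1` when `q₀` is finite.

Both openness statements follow from the reverse Hölder inequality `IsA.reverseHolder`, which says
that a Muckenhoupt weight `u` satisfies `⨍_B u^{1+δ} ≤ M (⨍_B u)^{1+δ}` for some `δ > 0`. Applied to
the dual weight `w^{-1/(s-1)}` it lowers the exponent of `A_s`; applied to `w^s`, which is a
Muckenhoupt weight when `w ∈ A_p ∩ RH_s`, it raises the exponent of `RH_s`.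

The reverse Hölder inequality is proved by a stopping-time argument on dyadic cubes, carried out
for abstract nested partitions: on a maximal cube where the average of `u` exceeds `l`, the cubes
with average above `2 N l` fill at most half of the volume, hence by the `A_∞` property
(`IsA.lintegral_le_of_volume_le`) miss a fixed proportion of the mass. So the masses of the
superlevel sets of the dyadic maximal function decay geometrically (`overLevel_decay`), and summing
over the levels against a small power gives higher integrability (`reverseHolder_cells`). Lebesgue
differentiation (`ae_le_of_cellAvg_le`) bounds `u` by the maximal function.

The definitions admit weights that vanish almost everywhere; a Muckenhoupt weight which is not of
this kind is positive almost everywhere (`MemA.ae_zero_or_ae_ne_zero`), and the degenerate weights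
belong to all the classes.
-/

open MeasureTheory Metric Set ENNReal
open scoped NNReal

noncomputable section

/-- The average `⨍_S g dx` of an `ℝ≥0∞`-valued function (Lebesgue measure). -/
def lavg {n : ℕ} (S : Set (En n)) (g : En n → ℝ≥0∞) : ℝ≥0∞ :=
  (∫⁻ y in S, g y) / volume S

/-- The Muckenhoupt class `A_s` for `s = 1` and `1 < s < ∞` (Lebesgue measure). -/
def MemA {n : ℕ} (w : En n → ℝ) (s : ℝ) : Prop :=
  (s = 1 ∧ ∃ C : ℝ≥0, ∀ (x : En n) (r : ℝ), 0 < r →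
      ∀ᵐ y ∂volume.restrict (ball x r),
        lavg (ball x r) (fun z => ENNReal.ofReal (w z)) ≤ (C : ℝ≥0∞) * ENNReal.ofReal (w y)) ∨
  (1 < s ∧ ∃ C : ℝ≥0, ∀ (x : En n) (r : ℝ), 0 < r →
      lavg (ball x r) (fun z => ENNReal.ofReal (w z)) *
        (lavg (ball x r) (fun z => ENNReal.ofReal (w z) ^ (1 - s / (s - 1)))) ^ (s - 1)
        ≤ (C : ℝ≥0∞))

/-- The reverse Hölder class `RH_s`, `1 < s < ∞` (Lebesgue measure). -/
def MemRH {n : ℕ} (w : En n → ℝ) (s : ℝ) : Prop :=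
  ∃ C : ℝ≥0, ∀ (x : En n) (r : ℝ), 0 < r →
    (lavg (ball x r) (fun z => ENNReal.ofReal (w z) ^ s)) ^ (1 / s)
      ≤ (C : ℝ≥0∞) * lavg (ball x r) (fun z => ENNReal.ofReal (w z))

/-- The reverse Hölder class with extended exponent `s ∈ (1,∞]`. -/
def MemRHe {n : ℕ} (w : En n → ℝ) (s : ℝ≥0∞) : Prop :=
  (s = ∞ ∧ ∃ C : ℝ≥0, ∀ (x : En n) (r : ℝ), 0 < r →
      ∀ᵐ y ∂volume.restrict (ball x r),
        ENNReal.ofReal (w y) ≤ (C : ℝ≥0∞) * lavg (ball x r) (fun z => ENNReal.ofReal (w z))) ∨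
  (s ≠ ∞ ∧ MemRH w s.toReal)

/-- `r_w = inf {r ≥ 1 : w ∈ A_r}`. -/
def rW {n : ℕ} (w : En n → ℝ) : ℝ := sInf {r : ℝ | 1 ≤ r ∧ MemA w r}

/-- `s_w = sup {s > 1 : w ∈ RH_s}` (an extended real, `∞` allowed). -/
def sW {n : ℕ} (w : En n → ℝ) : ℝ≥0∞ := sSup {s : ℝ≥0∞ | 1 < s ∧ MemRHe w s}

/-- The conjugate exponent `(s_w)'`, interpreted as `1` when `s_w = ∞`. -/
def sWconj {n : ℕ} (w : En n → ℝ) : ℝ≥0∞ :=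
  if sW w = ∞ then 1 else ENNReal.ofReal ((sW w).toReal / ((sW w).toReal - 1))

/-- The set `W_w(p₀,q₀) = {p : p₀ < p < q₀, w ∈ A_{p/p₀} ∩ RH_{(q₀/p)'}}`; when `q₀ = ∞` the
conjugate exponent `(q₀/p)' = 1` and the reverse Hölder condition is void. -/
def Wset {n : ℕ} (w : En n → ℝ) (p₀ : ℝ) (q₀ : ℝ≥0∞) : Set ℝ :=
  {p : ℝ | p₀ < p ∧ ENNReal.ofReal p < q₀ ∧ MemA w (p / p₀) ∧
    (q₀ ≠ ∞ → MemRH w ((q₀.toReal / p) / (q₀.toReal / p - 1)))}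

/-! ### Stopping times on nested partitions -/

section Stopping
variable {X I : Type*}

/-- The cell of generation `k` containing `x`, where the partition of generation `k` is given by
the fibres of a labelling `c k : X → I`. -/
def cell (c : ℕ → X → I) (k : ℕ) (x : X) : Set X := {y | c k y = c k x}

lemma cell_congr {c : ℕ → X → I} {k : ℕ} {x y : X} (h : c k y = c k x) : cell c k y = cell c k x := by
  simp [cell, h]

/-- Nestedness: equal labels in a generation force equal labels in all coarser ones. -/
lemma coarser_of_le {c : ℕ → X → I} (href : ∀ k x y, c (k + 1) x = c (k + 1) y → c k x = c k y)
    {j k : ℕ} (hjk : j ≤ k) {x y : X} (h : c k x = c k y) : c j x = c j y := by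
  induction k, hjk using Nat.le_induction with
  | base => exact h
  | succ k _ ih => exact ih (href _ _ _ h)

variable [MeasurableSpace X]

/-- The average density `ν Q / μ Q` over the cell `Q` of generation `k` containing `x`. -/
def cellAvg (μ ν : Measure X) (c : ℕ → X → I) (k : ℕ) (x : X) : ℝ≥0∞ :=
  ν (cell c k x) / μ (cell c k x)

/-- The points lying in some cell whose average density exceeds `l`, that is, the superlevel set
of the dyadic maximal function of `ν` relative to `μ`. -/
def overLevel (μ ν : Measure X) (c : ℕ → X → I) (l : ℝ≥0∞) : Set X :=
  {x | ∃ k, l < cellAvg μ ν c k x}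

variable {μ ν : Measure X} {c : ℕ → X → I}

lemma cellAvg_congr {k : ℕ} {x y : X} (h : c k y = c k x) :
    cellAvg μ ν c k y = cellAvg μ ν c k x := by
  simp [cellAvg, cell_congr h]

variable [MeasurableSpace I] [MeasurableSingletonClass I]

lemma measurableSet_cell (hc : ∀ k, Measurable (c k)) (k : ℕ) (x : X) :
    MeasurableSet (cell c k x) := hc k (measurableSet_singleton (c k x))

variable [Countable I]

lemma measurable_cellAvg (hc : ∀ k, Measurable (c k)) (k : ℕ) :
    Measurable (cellAvg μ ν c k) :=
  (measurable_of_countable (fun i : I => ν {y | c k y = i} / μ {y | c k y = i})).comp (hc k)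

lemma measurableSet_overLevel (hc : ∀ k, Measurable (c k)) (l : ℝ≥0∞) :
    MeasurableSet (overLevel μ ν c l) := by
  have : overLevel μ ν c l = ⋃ k, {x | l < cellAvg μ ν c k x} := by
    ext; simp [overLevel]
  rw [this]
  exact MeasurableSet.iUnion fun k => measurableSet_lt measurable_const (measurable_cellAvg hc k)

/-- Summation over the maximal cells on which the average exceeds `l`: an inequality between two
measures that holds on each of these cells holds on their union. -/
lemma measure_overLevel_le (hc : ∀ k, Measurable (c k))
    (href : ∀ k x y, c (k + 1) x = c (k + 1) y → c k x = c k y)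
    (m₁ m₂ : Measure X) {G H : Set X} (hH : MeasurableSet H) (x₀ : X) (l κ : ℝ≥0∞)
    (h : ∀ j z, z ∈ cell c 0 x₀ → l < cellAvg μ ν c j z → (∀ k < j, cellAvg μ ν c k z ≤ l) →
      m₁ (G ∩ cell c j z) ≤ κ * m₂ (H ∩ cell c j z)) :
    m₁ (G ∩ (overLevel μ ν c l ∩ cell c 0 x₀)) ≤
      κ * m₂ (H ∩ (overLevel μ ν c l ∩ cell c 0 x₀)) := by
  set S : ℕ × I → Set X := fun p => {x | x ∈ cell c 0 x₀ ∧ c p.1 x = p.2 ∧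
    l < cellAvg μ ν c p.1 x ∧ ∀ k < p.1, cellAvg μ ν c k x ≤ l} with hS
  have hU : overLevel μ ν c l ∩ cell c 0 x₀ = ⋃ p, S p := by
    ext x
    simp only [mem_inter_iff, mem_iUnion]
    constructor
    · rintro ⟨hx, hx0⟩
      classical
      refine ⟨(Nat.find hx, c (Nat.find hx) x), hx0, rfl, Nat.find_spec hx, fun k hk => ?_⟩
      exact not_lt.1 (Nat.find_min hx hk)
    · rintro ⟨p, hx0, -, hx, -⟩
      exact ⟨⟨_, hx⟩, hx0⟩
  have hSm : ∀ p, MeasurableSet (S p) := by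
    intro p
    have : S p = cell c 0 x₀ ∩ (c p.1 ⁻¹' {p.2} ∩ ({x | l < cellAvg μ ν c p.1 x} ∩
        ⋂ k, ⋂ (_ : k < p.1), {x | cellAvg μ ν c k x ≤ l})) := by
      ext x; simp only [hS, mem_ofPred_eq, mem_inter_iff, mem_preimage, mem_singleton_iff, mem_iInter]
    rw [this]
    refine (measurableSet_cell hc 0 x₀).inter ((hc _ (measurableSet_singleton _)).inter
      ((measurableSet_lt measurable_const (measurable_cellAvg hc _)).inter ?_))
    exact MeasurableSet.iInter fun k => MeasurableSet.iInter fun _ =>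
      measurableSet_le (measurable_cellAvg hc _) measurable_const
  have hSd : Pairwise (Function.onFun Disjoint S) := by
    rintro ⟨j, i⟩ ⟨j', i'⟩ hne
    refine Set.disjoint_left.2 ?_
    rintro x ⟨-, h1, h2, h3⟩ ⟨-, h1', h2', h3'⟩
    dsimp only at *
    rcases lt_trichotomy j j' with hj | hj | hj
    · exact absurd (h3' j hj) (not_le.2 h2)
    · subst hj; exact hne (by rw [← h1, ← h1'])
    · exact absurd (h3 j' hj) (not_le.2 h2')
  have hcell : ∀ p, m₁ (G ∩ S p) ≤ κ * m₂ (H ∩ S p) := by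
    intro p
    rcases (S p).eq_empty_or_nonempty with he | ⟨z, hz0, hz1, hz2, hz3⟩
    · simp [he]
    · have : S p = cell c p.1 z := by
        ext x
        constructor
        · rintro ⟨-, h1, -⟩
          exact h1.trans hz1.symm
        · intro hx
          have hx' : c p.1 x = c p.1 z := hx
          refine ⟨(coarser_of_le href (Nat.zero_le _) hx').trans hz0, hx'.trans hz1, ?_, ?_⟩
          · rwa [cellAvg_congr hx']
          · intro k hk
            rw [cellAvg_congr (coarser_of_le href hk.le hx')]
            exact hz3 k hk
      rw [this]
      exact h _ z hz0 hz2 hz3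
  rw [hU, inter_iUnion, inter_iUnion]
  calc m₁ (⋃ p, G ∩ S p) ≤ ∑' p, m₁ (G ∩ S p) := measure_iUnion_le _
    _ ≤ ∑' p, κ * m₂ (H ∩ S p) := ENNReal.tsum_le_tsum hcell
    _ = κ * m₂ (⋃ p, H ∩ S p) := by
      rw [ENNReal.tsum_mul_left, measure_iUnion]
      · exact fun p q hpq => (hSd hpq).mono inter_subset_right inter_subset_right
      · exact fun p => hH.inter (hSm p)

/-- The `ν`-mass of the superlevel sets decays geometrically: on a maximal cell `Q` of level `l`
the set of level `2 N l` fills at most half of `Q` with respect to `μ`, so its complement carries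
a fixed proportion of the `ν`-mass of `Q`. -/
lemma overLevel_decay (hc : ∀ k, Measurable (c k))
    (href : ∀ k x y, c (k + 1) x = c (k + 1) y → c k x = c k y)
    (hμ0 : ∀ k x, μ (cell c k x) ≠ 0) (hμt : ∀ k x, μ (cell c k x) ≠ ∞)
    (hνt : ∀ k x, ν (cell c k x) ≠ ∞)
    {N K : ℝ≥0} (hN : 1 ≤ N) (hK : 1 ≤ K)
    (hpar : ∀ k x, μ (cell c k x) ≤ N * μ (cell c (k + 1) x))
    (hA : ∀ k x E, MeasurableSet E → E ⊆ cell c k x → μ (cell c k x) ≤ 2 * μ E →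
      ν (cell c k x) ≤ K * ν E)
    (x₀ : X) {l : ℝ≥0∞} (hl : cellAvg μ ν c 0 x₀ ≤ l) (hl0 : l ≠ 0) (hlt : l ≠ ∞) :
    ν (overLevel μ ν c (2 * N * l) ∩ cell c 0 x₀) ≤
      (1 - (K : ℝ≥0∞)⁻¹) * ν (overLevel μ ν c l ∩ cell c 0 x₀) := by
  have hN1 : (1 : ℝ≥0∞) ≤ N := by exact_mod_cast hN
  have hlp_ne : 2 * (N : ℝ≥0∞) * l ≠ 0 := by
    have : (N : ℝ≥0∞) ≠ 0 := (zero_lt_one.trans_le hN1).ne'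
    simp [hl0]; exact fun h => this (by simp [h])
  have hlp_top : 2 * (N : ℝ≥0∞) * l ≠ ∞ := by finiteness
  have hll : l ≤ 2 * N * l := by
    calc l = 1 * l := (one_mul l).symm
      _ ≤ 2 * N * l := by
        gcongr
        calc (1 : ℝ≥0∞) = 1 * 1 := by simp
          _ ≤ 2 * N := by gcongr; norm_num
  set l' := 2 * (N : ℝ≥0∞) * l with hl'
  set D := overLevel μ ν c l' with hD
  have hDm : MeasurableSet D := measurableSet_overLevel hc _
  have hsub : D ∩ cell c 0 x₀ = D ∩ (overLevel μ ν c l ∩ cell c 0 x₀) := by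
    ext x
    simp only [mem_inter_iff]
    constructor
    · rintro ⟨⟨k, hk⟩, h0⟩
      exact ⟨⟨k, hk⟩, ⟨k, hll.trans_lt hk⟩, h0⟩
    · rintro ⟨h1, -, h0⟩
      exact ⟨h1, h0⟩
  rw [hsub]
  have := measure_overLevel_le (G := D) (H := univ) hc href ν ν MeasurableSet.univ x₀ l
    (1 - (K : ℝ≥0∞)⁻¹) (μ := μ) (ν := ν) ?_
  · simpa using this
  intro j z hz0 hzj hzk
  set Q := cell c j z with hQ
  have hQm : MeasurableSet Q := measurableSet_cell hc j z
  have hQ0 : Q ⊆ cell c 0 x₀ := fun y hy =>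
    (coarser_of_le href (Nat.zero_le _) (show c j y = c j z from hy)).trans hz0
  -- weak type estimate on the cell `Q`
  have hweak : μ (Q ∩ D) ≤ l'⁻¹ * ν Q := by
    have h1 := measure_overLevel_le (G := Q) (H := Q) hc href μ ν hQm x₀ l' l'⁻¹
      (μ := μ) (ν := ν) ?_
    · have e : Q ∩ (D ∩ cell c 0 x₀) = Q ∩ D := by
        rw [← inter_assoc]; exact inter_eq_left.2 (inter_subset_left.trans hQ0)
      rw [← hD, e] at h1
      exact h1.trans (by gcongr; exact inter_subset_left)
    intro i y hy0 hyi hyk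
    by_cases hdis : (Q ∩ cell c i y).Nonempty
    · obtain ⟨t, ht1, ht2⟩ := hdis
      have ht1' : c j t = c j z := ht1
      have ht2' : c i t = c i y := ht2
      have hji : j ≤ i := by
        by_contra hij
        push Not at hij
        have e : c i y = c i z := ht2'.symm.trans (coarser_of_le href hij.le ht1')
        have := hzk i hij
        rw [← cellAvg_congr e] at this
        exact absurd hyi (not_lt.2 (this.trans hll))
      have hsubQ : cell c i y ⊆ Q := by
        intro s hs
        have hs' : c i s = c i t := (show c i s = c i y from hs).trans ht2'.symm
        exact (coarser_of_le href hji hs').trans ht1'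
      rw [inter_eq_right.2 hsubQ]
      have h2 : l' * μ (cell c i y) ≤ ν (cell c i y) :=
        (ENNReal.le_div_iff_mul_le (Or.inl (hμ0 i y)) (Or.inl (hμt i y))).1 hyi.le
      rw [← ENNReal.mul_le_iff_le_inv hlp_ne hlp_top]
      exact h2
    · rw [not_nonempty_iff_eq_empty.1 hdis]; simp
  -- the average over the maximal cell `Q` is at most `N * l`
  have hup : ν Q ≤ N * l * μ Q := by
    rcases j with _ | j
    · rw [cellAvg_congr hz0] at hzj
      exact absurd hl (not_le.2 hzj)
    · have h1 := hzk j (Nat.lt_succ_self j)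
      rw [cellAvg, ENNReal.div_le_iff (hμ0 _ _) (hμt _ _)] at h1
      calc ν Q ≤ ν (cell c j z) := measure_mono fun y hy => href _ _ _ hy
        _ ≤ l * μ (cell c j z) := h1
        _ ≤ l * (N * μ Q) := by gcongr; exact hpar j z
        _ = N * l * μ Q := by ring
  have hhalf : 2 * μ (Q ∩ D) ≤ μ Q := by
    have h3 : l' * μ (Q ∩ D) ≤ N * l * μ Q :=
      (by rw [ENNReal.mul_le_iff_le_inv hlp_ne hlp_top]; exact hweak : l' * μ (Q ∩ D) ≤ ν Q).trans hup
    have hNl0 : (N : ℝ≥0∞) * l ≠ 0 := by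
      intro h; apply hlp_ne; rw [hl', mul_assoc, h, mul_zero]
    have hNlt : (N : ℝ≥0∞) * l ≠ ∞ := by finiteness
    rw [← ENNReal.mul_le_mul_iff_right hNl0 hNlt]
    calc N * l * (2 * μ (Q ∩ D)) = l' * μ (Q ∩ D) := by rw [hl']; ring
      _ ≤ _ := h3
  have hE : μ Q ≤ 2 * μ (Q \ D) := by
    have h4 : μ (Q ∩ D) + μ (Q \ D) = μ Q := measure_inter_add_sdiff Q hDm
    have hfin : μ Q ≠ ∞ := hμt j z
    have h5 : μ Q + μ Q ≤ μ Q + 2 * μ (Q \ D) := by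
      calc μ Q + μ Q = 2 * μ (Q ∩ D) + 2 * μ (Q \ D) := by rw [← mul_add, h4, two_mul]
        _ ≤ _ := by gcongr
    exact (ENNReal.add_le_add_iff_left hfin).1 h5
  have hKE := hA j z (Q \ D) (hQm.diff hDm) sdiff_subset hE
  have h6 : ν (Q ∩ D) + ν (Q \ D) = ν Q := measure_inter_add_sdiff Q hDm
  have hK0 : (K : ℝ≥0∞) ≠ 0 := by
    have : (0 : ℝ≥0) < K := zero_lt_one.trans_le hK
    exact_mod_cast this.ne'
  have h7 : (K : ℝ≥0∞)⁻¹ * ν Q ≤ ν (Q \ D) := by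
    rw [mul_comm, ← div_eq_mul_inv]
    exact ENNReal.div_le_of_le_mul' hKE
  rw [inter_comm, univ_inter, ENNReal.sub_mul (fun _ _ => hνt j z), one_mul]
  apply ENNReal.le_sub_of_add_le_right
  · exact ne_top_of_le_ne_top (hνt j z) (h7.trans (measure_mono sdiff_subset))
  · calc ν (Q ∩ D) + (K : ℝ≥0∞)⁻¹ * ν Q ≤ ν (Q ∩ D) + ν (Q \ D) := by gcongr
      _ = ν Q := h6

/-- For a ratio `θ < 1` and a growth factor `a`, a small power of `a` does not destroy the
geometric decay. -/
lemma exists_rpow_mul_lt_one (a : ℝ≥0) {θ : ℝ≥0∞} (ha : 1 ≤ a) (hθ : θ < 1) :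
    ∃ δ : ℝ, 0 < δ ∧ (a : ℝ≥0∞) ^ δ * θ < 1 := by
  lift θ to ℝ≥0 using hθ.ne_top
  have hθ' : θ < 1 := by exact_mod_cast hθ
  have hcont : Filter.Tendsto (fun δ : ℝ => (a : ℝ) ^ δ * (θ : ℝ)) (nhdsWithin 0 (Ioi 0))
      (nhds ((a : ℝ) ^ (0 : ℝ) * θ)) := by
    have ha0 : (a : ℝ) ≠ 0 := by
      have : (0 : ℝ≥0) < a := zero_lt_one.trans_le ha
      exact_mod_cast this.ne'
    exact ((Real.continuousAt_const_rpow ha0).tendsto.mono_left nhdsWithin_le_nhds).mul_const _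
  have hlt : (a : ℝ) ^ (0 : ℝ) * θ < 1 := by
    rw [Real.rpow_zero, one_mul]; exact_mod_cast hθ'
  obtain ⟨δ, hδ, hδ0⟩ := ((hcont.eventually_lt_const hlt).and self_mem_nhdsWithin).exists
  refine ⟨δ, hδ0, ?_⟩
  rw [← ENNReal.coe_rpow_of_nonneg _ (le_of_lt hδ0)]
  exact_mod_cast hδ

/-- Higher integrability of a density `u` from geometric decay of the superlevel sets: the space
is cut into layers according to the last level `(2 N) ^ k` times the average over the initial cell
that the maximal function exceeds, and the resulting series is geometric. The exponent and the
constant depend only on `N` (growth of a cell from one generation to the previous one) and `K`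
(control of the mass of a cell by any subset of at least half its measure), so they are uniform
over all grids. -/
lemma reverseHolder_cells {N K : ℝ≥0} (hN : 1 ≤ N) (hK : 1 ≤ K) :
    ∃ (δ : ℝ) (M : ℝ≥0), 0 < δ ∧
    ∀ (μ : Measure X) (u : X → ℝ≥0∞) (c : ℕ → X → I), AEMeasurable u μ →
    (∀ k, Measurable (c k)) →
    (∀ k x y, c (k + 1) x = c (k + 1) y → c k x = c k y) →
    (∀ k x, μ (cell c k x) ≠ 0) → (∀ k x, μ (cell c k x) ≠ ∞) →
    (∀ k x, μ.withDensity u (cell c k x) ≠ ∞) →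
    (∀ k x, μ (cell c k x) ≤ N * μ (cell c (k + 1) x)) →
    (∀ k x E, MeasurableSet E → E ⊆ cell c k x → μ (cell c k x) ≤ 2 * μ E →
      μ.withDensity u (cell c k x) ≤ K * μ.withDensity u E) →
    (∀ᵐ x ∂μ, ∀ l, (∀ k, cellAvg μ (μ.withDensity u) c k x ≤ l) → u x ≤ l) →
    ∀ x₀, ∫⁻ x in cell c 0 x₀, u x ^ (1 + δ) ∂μ ≤
      M * cellAvg μ (μ.withDensity u) c 0 x₀ ^ δ * ∫⁻ x in cell c 0 x₀, u x ∂μ := by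
  have hθ : 1 - (K : ℝ≥0∞)⁻¹ < 1 := by
    apply ENNReal.sub_lt_self ENNReal.one_ne_top one_ne_zero
    simp
  have ha : 1 ≤ 2 * N := by
    calc (1 : ℝ≥0) = 1 * 1 := by simp
      _ ≤ 2 * N := by gcongr; norm_num
  obtain ⟨δ, hδ, hlt⟩ := exists_rpow_mul_lt_one (2 * N) ha hθ
  set θ := 1 - (K : ℝ≥0∞)⁻¹ with hθdef
  set A : ℝ≥0∞ := ((2 * N : ℝ≥0) : ℝ≥0∞) with hA_def
  have hA1 : 1 ≤ A := by rw [hA_def]; exact_mod_cast ha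
  have hAt : A ≠ ∞ := ENNReal.coe_ne_top
  set M : ℝ≥0∞ := 1 + A ^ δ * (1 - A ^ δ * θ)⁻¹ with hM
  have hMt : M ≠ ∞ := by
    have h1 : A ^ δ ≠ ∞ := ENNReal.rpow_ne_top_of_nonneg hδ.le hAt
    have h2 : (1 - A ^ δ * θ)⁻¹ ≠ ∞ := ENNReal.inv_ne_top.2 (tsub_pos_of_lt hlt).ne'
    rw [hM]
    exact ENNReal.add_ne_top.2 ⟨ENNReal.one_ne_top, ENNReal.mul_ne_top h1 h2⟩
  refine ⟨δ, M.toNNReal, hδ, ?_⟩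
  intro μ u c hu hc href hμ0 hμt hνt hpar hA hdiff x₀
  rw [ENNReal.coe_toNNReal hMt]
  set ν := μ.withDensity u with hν
  set R := cell c 0 x₀ with hR
  have hRm : MeasurableSet R := measurableSet_cell hc 0 x₀
  set l₀ := cellAvg μ ν c 0 x₀ with hl₀
  have hl₀t : l₀ ≠ ∞ := ENNReal.div_ne_top (hνt 0 x₀) (hμ0 0 x₀)
  have hνR : ν R = ∫⁻ x in R, u x ∂μ := withDensity_apply _ hRm
  have hmul : ∀ x, u x ^ (1 + δ) = u x * u x ^ δ := fun x => by
    rw [ENNReal.rpow_add_of_nonneg _ _ zero_le_one hδ.le, ENNReal.rpow_one]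
  rcases eq_or_ne l₀ 0 with h0 | h0
  · have hR0 : ∫⁻ x in R, u x ∂μ = 0 := by
      rw [← hνR]
      rw [hl₀, cellAvg, ENNReal.div_eq_zero_iff] at h0
      exact h0.resolve_right (hμt 0 x₀)
    have hu0 := (lintegral_eq_zero_iff' hu.restrict).1 hR0
    have : ∫⁻ x in R, u x ^ (1 + δ) ∂μ = 0 := by
      rw [lintegral_eq_zero_iff' (hu.restrict.pow_const _)]
      filter_upwards [hu0] with x hx
      rw [hmul, hx]; simp
    rw [this]; exact zero_le
  set D : ℕ → Set X := fun k => overLevel μ ν c (A ^ k * l₀) with hD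
  have hDm : ∀ k, MeasurableSet (D k) := fun k => measurableSet_overLevel hc _
  have hA0 : A ≠ 0 := (zero_lt_one.trans_le hA1).ne'
  have hdecay : ∀ k, ν (D k ∩ R) ≤ θ ^ k * ν R := by
    intro k
    induction k with
    | zero => simpa using measure_mono inter_subset_right
    | succ k ih =>
      have h1 : 1 ≤ A ^ k := one_le_pow₀ hA1
      have := overLevel_decay (μ := μ) (ν := ν) hc href hμ0 hμt hνt hN hK hpar hA x₀
        (l := A ^ k * l₀) (by simpa using mul_le_mul_left h1 l₀)
        (mul_ne_zero (pow_ne_zero _ hA0) h0) (ENNReal.mul_ne_top (ENNReal.pow_ne_top hAt) hl₀t)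
      have e : 2 * (N : ℝ≥0∞) * (A ^ k * l₀) = A ^ (k + 1) * l₀ := by
        rw [hA_def]; push_cast; ring
      rw [e] at this
      calc ν (D (k + 1) ∩ R) ≤ θ * ν (D k ∩ R) := this
        _ ≤ θ * (θ ^ k * ν R) := by gcongr
        _ = θ ^ (k + 1) * ν R := by ring
  -- layer decomposition; on the intersection of all the `D k` the right-hand side is infinite
  have hpt : ∀ᵐ x ∂μ, u x ^ δ ≤
      l₀ ^ δ + ∑' k, (D k).indicator (fun _ => (A ^ (k + 1) * l₀) ^ δ) x := by
    filter_upwards [hdiff] with x hx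
    have key : ∀ k, x ∉ D k → u x ≤ A ^ k * l₀ := fun k hk =>
      hx _ fun j => not_lt.1 fun hj => hk ⟨j, hj⟩
    by_cases hall : ∀ k, x ∈ D k
    · have : ∑' k, (D k).indicator (fun _ => (A ^ (k + 1) * l₀) ^ δ) x = ∞ := by
        refine top_unique ?_
        have hne : l₀ ^ δ ≠ 0 := (ENNReal.rpow_pos (pos_iff_ne_zero.2 h0) hl₀t).ne'
        rw [← ENNReal.tsum_const_eq_top_of_ne_zero (α := ℕ) hne]
        refine ENNReal.tsum_le_tsum fun k => ?_
        rw [indicator_of_mem (hall k)]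
        have h1 : 1 ≤ A ^ (k + 1) := one_le_pow₀ hA1
        exact ENNReal.rpow_le_rpow (by simpa using mul_le_mul_left h1 l₀) hδ.le
      rw [this]; simp
    · push Not at hall
      classical
      have hmin := Nat.find_spec hall
      rcases hk : Nat.find hall with _ | k
      · rw [hk] at hmin
        refine le_add_right (ENNReal.rpow_le_rpow ?_ hδ.le)
        simpa using key 0 hmin
      · rw [hk] at hmin
        have hmem : x ∈ D k := by
          by_contra hcon
          exact Nat.find_min hall (by omega) hcon
        refine le_add_left ?_
        refine le_trans ?_ (ENNReal.le_tsum k)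
        rw [indicator_of_mem hmem]
        exact ENNReal.rpow_le_rpow (key _ hmin) hδ.le
  have hgm : ∀ k, Measurable ((D k).indicator (fun _ : X => (A ^ (k + 1) * l₀) ^ δ)) :=
    fun k => measurable_const.indicator (hDm k)
  have hind : ∀ k, ∫⁻ x in R, (D k).indicator (fun _ => (A ^ (k + 1) * l₀) ^ δ) x ∂ν ≤
      A ^ δ * l₀ ^ δ * ν R * (A ^ δ * θ) ^ k := by
    intro k
    rw [lintegral_indicator_const (hDm k), Measure.restrict_apply (hDm k),
      ENNReal.mul_rpow_of_nonneg _ _ hδ.le]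
    have e : (A ^ (k + 1)) ^ δ = A ^ δ * (A ^ δ) ^ k := by
      rw [← ENNReal.rpow_natCast, ← ENNReal.rpow_mul, mul_comm, ENNReal.rpow_mul,
        ENNReal.rpow_natCast, pow_succ']
    rw [e]
    calc A ^ δ * (A ^ δ) ^ k * l₀ ^ δ * ν (D k ∩ R)
        ≤ A ^ δ * (A ^ δ) ^ k * l₀ ^ δ * (θ ^ k * ν R) := by gcongr; exact hdecay k
      _ = _ := by rw [mul_pow]; ring
  calc ∫⁻ x in R, u x ^ (1 + δ) ∂μ
      ≤ ∫⁻ x in R, (u * fun x => l₀ ^ δ +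
          ∑' k, (D k).indicator (fun _ => (A ^ (k + 1) * l₀) ^ δ) x) x ∂μ := by
        refine lintegral_mono_ae (ae_restrict_of_ae ?_)
        filter_upwards [hpt] with x hx
        rw [hmul, Pi.mul_apply]
        gcongr
    _ = ∫⁻ x in R, (l₀ ^ δ +
          ∑' k, (D k).indicator (fun _ => (A ^ (k + 1) * l₀) ^ δ) x) ∂ν := by
        rw [hν, restrict_withDensity hRm, lintegral_withDensity_eq_lintegral_mul₀ hu.restrict]
        exact (measurable_const.add (Measurable.tsum hgm)).aemeasurable
    _ = l₀ ^ δ * ν R +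
          ∑' k, ∫⁻ x in R, (D k).indicator (fun _ => (A ^ (k + 1) * l₀) ^ δ) x ∂ν := by
        rw [lintegral_add_left measurable_const, lintegral_tsum fun k => (hgm k).aemeasurable]
        simp
    _ ≤ l₀ ^ δ * ν R + ∑' k, A ^ δ * l₀ ^ δ * ν R * (A ^ δ * θ) ^ k := by
        gcongr with k
        exact hind k
    _ = M * l₀ ^ δ * ν R := by
        rw [ENNReal.tsum_mul_left, ENNReal.tsum_geometric, hM]; ring
    _ = M * l₀ ^ δ * ∫⁻ x in R, u x ∂μ := by rw [hνR]

end Stopping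

/-! ### Dyadic cubes -/

section Cubes
variable {n : ℕ}

/-- Index of the dyadic cube of generation `k` (side `L / 2 ^ k`, grid based at `a`) that
contains `y`. -/
def cubeIdx (a : En n) (L : ℝ) (k : ℕ) (y : En n) : Fin n → ℤ :=
  fun i => ⌊2 ^ k * ((y i - a i) / L)⌋

lemma measurable_cubeIdx (a : En n) (L : ℝ) (k : ℕ) : Measurable (cubeIdx a L k) := by
  refine measurable_pi_lambda _ fun i => Int.measurable_floor.comp ?_
  have : Measurable fun y : En n => y i := (EuclideanSpace.proj (𝕜 := ℝ) i).continuous.measurable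
  fun_prop

lemma floor_le_of_floor_two_mul_eq {s t : ℝ} (h : ⌊2 * s⌋ = ⌊2 * t⌋) : ⌊s⌋ ≤ ⌊t⌋ := by
  have h1 : ((2 * ⌊s⌋ : ℤ) : ℝ) ≤ 2 * s := by push_cast; linarith [Int.floor_le s]
  have h2 : 2 * ⌊s⌋ ≤ ⌊2 * t⌋ := h ▸ Int.le_floor.2 h1
  have h3 := Int.le_floor.1 h2
  push_cast at h3
  exact Int.le_floor.2 (by linarith)

lemma cubeIdx_coarser (a : En n) (L : ℝ) (k : ℕ) (x y : En n)
    (h : cubeIdx a L (k + 1) x = cubeIdx a L (k + 1) y) :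
    cubeIdx a L k x = cubeIdx a L k y := by
  funext i
  have hi : ⌊2 * (2 ^ k * ((x i - a i) / L))⌋ = ⌊2 * (2 ^ k * ((y i - a i) / L))⌋ := by
    have := congrFun h i
    simp only [cubeIdx, pow_succ] at this
    convert this using 2 <;> ring
  exact le_antisymm (floor_le_of_floor_two_mul_eq hi) (floor_le_of_floor_two_mul_eq hi.symm)

lemma volume_cube (a : En n) {L : ℝ} (hL : 0 < L) (k : ℕ) (x : En n) :
    volume (cell (cubeIdx a L) k x) = ENNReal.ofReal (L / 2 ^ k) ^ n := by
  have h : cell (cubeIdx a L) k x = (MeasurableEquiv.toLp 2 (Fin n → ℝ)).symm ⁻¹'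
      (univ.pi fun i => Ico (a i + cubeIdx a L k x i * (L / 2 ^ k))
        (a i + (cubeIdx a L k x i + 1) * (L / 2 ^ k))) := by
    ext y
    simp only [cell, mem_ofPred_eq, mem_preimage, mem_univ_pi, mem_Ico]
    rw [funext_iff]
    refine forall_congr' fun i => ?_
    have h2 : (0 : ℝ) < 2 ^ k := by positivity
    have hs : y i = a i + 2 ^ k * ((y i - a i) / L) * (L / 2 ^ k) := by field_simp; ring
    have hpos : 0 < L / 2 ^ k := by positivity
    change _ ↔ _ ≤ y i ∧ y i < _
    conv_lhs => rw [cubeIdx, Int.floor_eq_iff]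
    conv_rhs => rw [hs]
    rw [add_le_add_iff_left, add_lt_add_iff_left, mul_le_mul_iff_left₀ hpos,
      mul_lt_mul_iff_left₀ hpos]
  rw [h, (EuclideanSpace.volume_preserving_symm_measurableEquiv_toLp (Fin n)).measure_preimage
    (MeasurableSet.univ_pi fun i => measurableSet_Ico).nullMeasurableSet, Real.volume_pi_Ico]
  simp only [add_sub_add_left_eq_sub, ← sub_mul, add_sub_cancel_left, one_mul]
  simp

lemma cube_subset_ball (a : En n) {L : ℝ} (hL : 0 < L) (k : ℕ) (x : En n) :
    cell (cubeIdx a L) k x ⊆ ball x ((n + 1) * (L / 2 ^ k)) := by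
  intro y hy
  have hpos : 0 < L / 2 ^ k := by positivity
  have hi : ∀ i, (y i - x i) ^ 2 ≤ (L / 2 ^ k) ^ 2 := by
    intro i
    have h1 := Int.abs_sub_lt_one_of_floor_eq_floor (congrFun (show cubeIdx a L k y = _ from hy) i)
    have h2 : 2 ^ k * ((y i - a i) / L) - 2 ^ k * ((x i - a i) / L) =
        (y i - x i) / (L / 2 ^ k) := by field_simp; ring
    rw [h2, abs_div, abs_of_pos hpos, div_lt_one hpos] at h1
    exact sq_le_sq' (by linarith [neg_abs_le (y i - x i)]) (by linarith [le_abs_self (y i - x i)])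
  rw [mem_ball, EuclideanSpace.dist_eq, Real.sqrt_lt' (by positivity)]
  calc ∑ i, dist (y i) (x i) ^ 2 = ∑ i, (y i - x i) ^ 2 := by
        simp [Real.dist_eq, sq_abs]
    _ ≤ ∑ _i : Fin n, (L / 2 ^ k) ^ 2 := Finset.sum_le_sum fun i _ => hi i
    _ = n * (L / 2 ^ k) ^ 2 := by simp
    _ < ((n + 1) * (L / 2 ^ k)) ^ 2 := by
      rw [mul_pow]
      gcongr
      nlinarith [(Nat.cast_nonneg n : (0 : ℝ) ≤ n)]

/-- Ratio of the volumes of the ball of radius `(n + 1) h` and of a cube of side `h`. -/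
def ballCubeRatio (n : ℕ) : ℝ≥0 :=
  (ENNReal.ofReal ((n + 1 : ℝ) ^ n) * volume (ball (0 : En n) 1)).toNNReal

lemma volume_ball_eq_cube (x : En n) {h : ℝ} (hh : 0 < h) :
    volume (ball x ((n + 1) * h)) = ballCubeRatio n * ENNReal.ofReal h ^ n := by
  rw [Measure.addHaar_ball_of_pos _ _ (by positivity), ballCubeRatio, ENNReal.coe_toNNReal]
  · rw [finrank_euclideanSpace_fin, mul_pow, ENNReal.ofReal_mul (by positivity),
      ENNReal.ofReal_pow hh.le]
    ring
  · exact ENNReal.mul_ne_top ENNReal.ofReal_ne_top measure_ball_lt_top.ne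

/-- Lebesgue differentiation along the dyadic cubes, in the form of a bound: `u` is almost
everywhere dominated by any upper bound for the averages over the cubes shrinking to the point. The
cubes are compared with the centred balls that contain them. -/
lemma ae_le_of_cellAvg_le (u : En n → ℝ≥0∞) (hu : AEMeasurable u) (hut : ∀ᵐ x, u x ≠ ∞)
    (hint : ∀ (x : En n) (r : ℝ), ∫⁻ y in ball x r, u y ≠ ∞) (a : En n) {L : ℝ} (hL : 0 < L) :
    ∀ᵐ x, ∀ l, (∀ k, cellAvg volume (volume.withDensity u) (cubeIdx a L) k x ≤ l) → u x ≤ l := by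
  set f : En n → ℝ := fun x => (u x).toReal with hf
  have hfu : ∀ᵐ x, ‖f x‖ₑ = u x := by
    filter_upwards [hut] with x hx
    rw [hf, Real.enorm_of_nonneg ENNReal.toReal_nonneg, ENNReal.ofReal_toReal hx]
  have hfloc : LocallyIntegrable f volume := by
    intro x
    refine ⟨ball x 1, ball_mem_nhds x one_pos, hu.ennreal_toReal.aestronglyMeasurable.restrict, ?_⟩
    rw [hasFiniteIntegral_iff_enorm, lintegral_congr_ae (ae_restrict_of_ae hfu)]
    exact (hint x 1).lt_top
  have hdiff := VitaliFamily.ae_tendsto_lintegral_enorm_sub_div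
    (Besicovitch.vitaliFamily (volume : Measure (En n))) hfloc
  filter_upwards [hdiff, hfu] with x hx hfx l hl
  set h : ℕ → ℝ := fun k => L / 2 ^ k with hh
  have hpos : ∀ k, 0 < h k := fun k => by positivity
  set ρ : ℕ → ℝ := fun k => (n + 1) * h k with hρ
  have hρpos : ∀ k, 0 < ρ k := fun k => by have := hpos k; positivity
  have hρ0 : Filter.Tendsto ρ Filter.atTop (nhdsWithin 0 (Ioi 0)) := by
    refine tendsto_nhdsWithin_iff.2 ⟨?_, Filter.Eventually.of_forall hρpos⟩
    have h1 : Filter.Tendsto (fun k : ℕ => (n + 1 : ℝ) * (L * (1 / 2 : ℝ) ^ k)) Filter.atTop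
        (nhds ((n + 1) * (L * 0))) :=
      ((_root_.tendsto_pow_atTop_nhds_zero_of_lt_one (by norm_num) (by norm_num)).const_mul L).const_mul _
    simp only [mul_zero] at h1
    refine h1.congr fun k => ?_
    simp [hρ, hh, div_eq_mul_inv]
  have hlim := hx.comp ((Besicovitch.tendsto_filterAt volume x).comp hρ0)
  have hlim2 : Filter.Tendsto (fun k => l + ballCubeRatio n *
      ((∫⁻ y in closedBall x (ρ k), ‖f y - f x‖ₑ) / volume (closedBall x (ρ k))))
      Filter.atTop (nhds (l + ballCubeRatio n * 0)) :=
    (ENNReal.Tendsto.const_mul hlim (Or.inr ENNReal.coe_ne_top)).const_add l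
  rw [mul_zero, add_zero] at hlim2
  refine ge_of_tendsto' hlim2 fun k => ?_
  set Q := cell (cubeIdx a L) k x with hQ
  have hQm : MeasurableSet Q := measurableSet_cell (measurable_cubeIdx a L) k x
  have hvQ : volume Q = ENNReal.ofReal (h k) ^ n := volume_cube a hL k x
  have hQ0 : volume Q ≠ 0 := by
    rw [hvQ]; exact pow_ne_zero _ (ENNReal.ofReal_pos.2 (hpos k)).ne'
  have hQt : volume Q ≠ ∞ := by rw [hvQ]; exact ENNReal.pow_ne_top ENNReal.ofReal_ne_top
  have hB : volume (closedBall x (ρ k)) = ballCubeRatio n * volume Q := by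
    rw [hvQ, ← volume_ball_eq_cube x (hpos k), Measure.addHaar_closedBall _ _ (hρpos k).le,
      Measure.addHaar_ball_of_pos _ _ (hρpos k)]
  have hR0 : (ballCubeRatio n : ℝ≥0∞) ≠ 0 := by
    intro h0
    rw [h0, zero_mul] at hB
    exact (measure_closedBall_pos volume x (hρpos k)).ne' hB
  have hl' : ∫⁻ y in Q, u y ≤ l * volume Q := by
    have := hl k
    rwa [cellAvg, ← hQ, ENNReal.div_le_iff hQ0 hQt, withDensity_apply _ hQm] at this
  have hsub : Q ⊆ closedBall x (ρ k) := (cube_subset_ball a hL k x).trans ball_subset_closedBall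
  rw [← ENNReal.mul_le_mul_iff_left hQ0 hQt, ← hfx]
  calc ‖f x‖ₑ * volume Q = ∫⁻ y in Q, ‖f x‖ₑ := by simp
    _ ≤ ∫⁻ y in Q, (u y + ‖f y - f x‖ₑ) := by
        refine lintegral_mono_ae (ae_restrict_of_ae ?_)
        filter_upwards [hfu] with y hy
        rw [← hy]
        have : f x = f y - (f y - f x) := by ring
        calc ‖f x‖ₑ = ‖f y - (f y - f x)‖ₑ := by rw [← this]
          _ ≤ _ := enorm_sub_le
    _ = (∫⁻ y in Q, u y) + ∫⁻ y in Q, ‖f y - f x‖ₑ := lintegral_add_left' hu.restrict _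
    _ ≤ l * volume Q + ∫⁻ y in closedBall x (ρ k), ‖f y - f x‖ₑ := by
        gcongr
    _ = (l + ballCubeRatio n *
        ((∫⁻ y in closedBall x (ρ k), ‖f y - f x‖ₑ) / volume (closedBall x (ρ k)))) * volume Q := by
        rw [add_mul]
        congr 1
        rw [mul_right_comm, ← hB, ENNReal.mul_div_cancel]
        · exact (measure_closedBall_pos volume x (hρpos k)).ne'
        · exact measure_closedBall_lt_top.ne

end Cubes

/-! ### The reverse Hölder inequality for Muckenhoupt weights -/

section Core
variable {n : ℕ}

/-- The `A_{1+t}` condition, `0 < t < ∞`, for an extended nonnegative weight. Values in `ℝ≥0∞` are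
allowed so that the condition applies to the dual weight `w ^ (-1/t)` and to powers of `w`. -/
def IsA (u : En n → ℝ≥0∞) (t : ℝ) : Prop :=
  ∃ C : ℝ≥0, ∀ (x : En n) (r : ℝ), 0 < r →
    lavg (ball x r) u * lavg (ball x r) (fun z => u z ^ (-t⁻¹)) ^ t ≤ C

lemma volume_ball_ne_zero (x : En n) {r : ℝ} (hr : 0 < r) : volume (ball x r) ≠ 0 :=
  (measure_ball_pos volume x hr).ne'

lemma volume_ball_ne_top (x : En n) (r : ℝ) : volume (ball x r) ≠ ∞ := measure_ball_lt_top.ne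

lemma setLIntegral_ne_zero_of_pos {u : En n → ℝ≥0∞} (hu : AEMeasurable u)
    (h0 : ∀ᵐ x, u x ≠ 0) {S : Set (En n)} (hS : volume S ≠ 0) : ∫⁻ y in S, u y ≠ 0 := by
  rw [Ne, lintegral_eq_zero_iff' hu.restrict]
  intro h
  have h1 : ∀ᵐ x ∂volume.restrict S, False := by
    filter_upwards [h, ae_restrict_of_ae h0] with x h1 h2 using h2 h1
  rw [ae_iff] at h1
  simp at h1
  exact hS h1

lemma IsA.lintegral_ball_ne_top {u : En n → ℝ≥0∞} {t : ℝ} (hA : IsA u t) (ht : 0 < t)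
    (hu : AEMeasurable u) (hut : ∀ᵐ x, u x ≠ ∞) (x : En n) (r : ℝ) :
    ∫⁻ y in ball x r, u y ≠ ∞ := by
  rcases le_or_gt r 0 with hr | hr
  · simp [ball_eq_empty.2 hr]
  obtain ⟨C, hC⟩ := hA
  have hσ : ∫⁻ y in ball x r, u y ^ (-t⁻¹) ≠ 0 := by
    refine setLIntegral_ne_zero_of_pos (hu.pow_const _) ?_ (volume_ball_ne_zero x hr)
    filter_upwards [hut] with y hy h
    rw [ENNReal.rpow_eq_zero_iff] at h
    rcases h with ⟨-, h⟩ | ⟨h, -⟩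
    · have := inv_pos.2 ht; linarith
    · exact hy h
  intro htop
  have := hC x r hr
  rw [lavg, htop, ENNReal.top_div_of_ne_top (volume_ball_ne_top x r), ENNReal.top_mul] at this
  · simp at this
  · rw [Ne, ENNReal.rpow_eq_zero_iff, not_or]
    refine ⟨fun h => ?_, fun h => absurd h.2 (not_lt.2 ht.le)⟩
    rw [lavg, ENNReal.div_eq_zero_iff] at h
    exact h.1.elim hσ (volume_ball_ne_top x r)

/-- The quantitative form of `A_∞` coming from Hölder's inequality: a subset that fills a fixed
proportion of a ball carries a fixed proportion of the weight. -/
lemma IsA.lintegral_le_of_volume_le {u : En n → ℝ≥0∞} {t : ℝ} (ht : 0 < t)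
    (hu : AEMeasurable u) (hu0 : ∀ᵐ x, u x ≠ 0) (hut : ∀ᵐ x, u x ≠ ∞) {C : ℝ≥0}
    (hC : ∀ (x : En n) (r : ℝ), 0 < r →
      lavg (ball x r) u * lavg (ball x r) (fun z => u z ^ (-t⁻¹)) ^ t ≤ C)
    (M : ℝ≥0) {x : En n} {r : ℝ} (hr : 0 < r) {E : Set (En n)}
    (hEB : E ⊆ ball x r) (hM : volume (ball x r) ≤ M * volume E) :
    ∫⁻ y in ball x r, u y ≤ (C * M ^ (1 + t) : ℝ≥0) * ∫⁻ y in E, u y := by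
  set B := ball x r
  have hB0 : volume B ≠ 0 := volume_ball_ne_zero x hr
  have hBt : volume B ≠ ∞ := volume_ball_ne_top x r
  have hE0 : volume E ≠ 0 := fun h => hB0 (by simpa [h] using hM)
  have hEt : volume E ≠ ∞ := ne_top_of_le_ne_top hBt (measure_mono hEB)
  have h1t : 0 < 1 + t := by linarith
  set I := ∫⁻ y in B, u y ^ (-t⁻¹) with hI
  set U := ∫⁻ y in B, u y with hU
  set W := ∫⁻ y in E, u y with hW
  have hconj : (1 + t).HolderConjugate ((1 + t) / t) := by
    rw [Real.holderConjugate_iff]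
    refine ⟨by linarith, ?_⟩
    field_simp
  have hholder : volume E ≤ W ^ (1 / (1 + t)) * I ^ (t / (1 + t)) := by
    have h := ENNReal.lintegral_mul_le_Lp_mul_Lq (volume.restrict E) hconj
      (f := fun y => u y ^ (1 + t)⁻¹) (g := fun y => u y ^ (-(1 + t)⁻¹))
      (hu.restrict.pow_const _) (hu.restrict.pow_const _)
    have e1 : ∫⁻ y in E, ((fun y => u y ^ (1 + t)⁻¹) * fun y => u y ^ (-(1 + t)⁻¹)) y
        = volume E := by
      rw [← setLIntegral_one]
      refine lintegral_congr_ae (ae_restrict_of_ae ?_)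
      filter_upwards [hu0, hut] with y h0 h1
      rw [Pi.mul_apply, ← ENNReal.rpow_add _ _ h0 h1]
      simp
    have e2 : ∀ y, (u y ^ (1 + t)⁻¹) ^ (1 + t) = u y := fun y => by
      rw [← ENNReal.rpow_mul, inv_mul_cancel₀ h1t.ne', ENNReal.rpow_one]
    have e3 : ∀ y, (u y ^ (-(1 + t)⁻¹)) ^ ((1 + t) / t) = u y ^ (-t⁻¹) := fun y => by
      rw [← ENNReal.rpow_mul]
      congr 1
      field_simp
    rw [e1] at h
    simp only [e2, e3] at h
    rw [one_div_div] at h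
    refine h.trans ?_
    gcongr
    exact lintegral_mono_set hEB
  have h2 : volume E ^ (1 + t) ≤ W * I ^ t := by
    calc volume E ^ (1 + t) ≤ (W ^ (1 / (1 + t)) * I ^ (t / (1 + t))) ^ (1 + t) := by gcongr
      _ = W * I ^ t := by
        rw [ENNReal.mul_rpow_of_nonneg _ _ h1t.le, ← ENNReal.rpow_mul, ← ENNReal.rpow_mul,
          one_div_mul_cancel h1t.ne', div_mul_cancel₀ _ h1t.ne', ENNReal.rpow_one]
  have h3 : U * I ^ t ≤ C * volume B ^ (1 + t) := by
    have h := hC x r hr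
    rw [lavg, lavg, ENNReal.div_rpow_of_nonneg _ _ ht.le] at h
    rw [ENNReal.rpow_add_of_nonneg _ _ zero_le_one ht.le, ENNReal.rpow_one]
    have hBt0 : volume B ^ t ≠ 0 := (ENNReal.rpow_pos (pos_iff_ne_zero.2 hB0) hBt).ne'
    have hBtt : volume B ^ t ≠ ∞ := ENNReal.rpow_ne_top_of_nonneg ht.le hBt
    calc U * I ^ t = (U / volume B * (I ^ t / volume B ^ t)) * (volume B * volume B ^ t) := by
          rw [mul_mul_mul_comm, ENNReal.div_mul_cancel hB0 hBt, ENNReal.div_mul_cancel hBt0 hBtt]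
      _ ≤ C * (volume B * volume B ^ t) := by gcongr
  have hEp0 : volume E ^ (1 + t) ≠ 0 := (ENNReal.rpow_pos (pos_iff_ne_zero.2 hE0) hEt).ne'
  have hEpt : volume E ^ (1 + t) ≠ ∞ := ENNReal.rpow_ne_top_of_nonneg h1t.le hEt
  rw [← ENNReal.mul_le_mul_iff_left hEp0 hEpt]
  calc U * volume E ^ (1 + t) ≤ U * (W * I ^ t) := by gcongr
    _ = W * (U * I ^ t) := by ring
    _ ≤ W * (C * volume B ^ (1 + t)) := by gcongr
    _ ≤ W * (C * (M * volume E) ^ (1 + t)) := by gcongr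
    _ = (C * M ^ (1 + t) : ℝ≥0) * W * volume E ^ (1 + t) := by
      rw [ENNReal.mul_rpow_of_nonneg _ _ h1t.le, ENNReal.coe_mul,
        ← ENNReal.coe_rpow_of_nonneg _ h1t.le]
      ring

/-- The reverse Hölder inequality for Muckenhoupt weights. Each ball `ball x r` is contained in the
cube of side `2 r` centred at `x`, which is taken as the initial cell of a dyadic grid; that cube
lies in a dilate of the ball, so its mass is comparable with the mass of the ball. -/
lemma IsA.reverseHolder {u : En n → ℝ≥0∞} {t : ℝ} (hA : IsA u t) (ht : 0 < t)
    (hu : AEMeasurable u) (hu0 : ∀ᵐ x, u x ≠ 0) (hut : ∀ᵐ x, u x ≠ ∞) :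
    ∃ (δ : ℝ) (M : ℝ≥0), 0 < δ ∧ ∀ (x : En n) (r : ℝ), 0 < r →
      lavg (ball x r) (fun z => u z ^ (1 + δ)) ≤ M * lavg (ball x r) u ^ (1 + δ) := by
  have hint := hA.lintegral_ball_ne_top ht hu hut
  obtain ⟨C, hC⟩ := hA
  have hAinf := @IsA.lintegral_le_of_volume_le n u t ht hu hu0 hut C hC
  set ρ := ballCubeRatio n with hρ
  -- constant for subsets of half the measure of a cube
  set K : ℝ≥0 := max 1 (C * (2 * ρ) ^ (1 + t)) with hK
  -- constant comparing a ball of radius `r` with the ball of radius `(n + 1) * (2 * r)`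
  set M₂ : ℝ≥0 := C * ((2 * (n + 1)) ^ n) ^ (1 + t) with hM₂
  have hN : (1 : ℝ≥0) ≤ 2 ^ n := one_le_pow₀ (by norm_num)
  obtain ⟨δ, M, hδ, hmain⟩ := reverseHolder_cells (X := En n) (I := Fin n → ℤ) hN
    (le_max_left 1 _ : 1 ≤ K)
  refine ⟨δ, M * M₂ ^ (1 + δ), hδ, fun x r hr => ?_⟩
  set L := 2 * r with hL_def
  have hL : 0 < L := by positivity
  set a : En n := WithLp.toLp 2 fun i => x i - r with ha
  have hc := measurable_cubeIdx a L
  have hvol := volume_cube a hL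
  have hside : ∀ k : ℕ, 0 < L / 2 ^ k := fun k => by positivity
  have hcell0 : ∀ k y, volume (cell (cubeIdx a L) k y) ≠ 0 := fun k y => by
    rw [hvol]; exact pow_ne_zero _ (ENNReal.ofReal_pos.2 (hside k)).ne'
  have hcellt : ∀ k y, volume (cell (cubeIdx a L) k y) ≠ ∞ := fun k y => by
    rw [hvol]; exact ENNReal.pow_ne_top ENNReal.ofReal_ne_top
  have hν : ∀ k y, volume.withDensity u (cell (cubeIdx a L) k y) ≠ ∞ := fun k y => by
    rw [withDensity_apply _ (measurableSet_cell hc k y)]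
    exact ne_top_of_le_ne_top (hint y _) (lintegral_mono_set (cube_subset_ball a hL k y))
  have hpar : ∀ k y, volume (cell (cubeIdx a L) k y) ≤
      ((2 ^ n : ℝ≥0) : ℝ≥0∞) * volume (cell (cubeIdx a L) (k + 1) y) := fun k y => by
    rw [hvol, hvol]
    push_cast
    rw [← mul_pow]
    have : L / 2 ^ k = 2 * (L / 2 ^ (k + 1)) := by rw [pow_succ]; field_simp
    rw [this, ENNReal.ofReal_mul (by norm_num)]
    simp
  have hhalf : ∀ k y E, MeasurableSet E → E ⊆ cell (cubeIdx a L) k y →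
      volume (cell (cubeIdx a L) k y) ≤ 2 * volume E →
      volume.withDensity u (cell (cubeIdx a L) k y) ≤ K * volume.withDensity u E := by
    intro k y E hE hEQ hvE
    rw [withDensity_apply _ (measurableSet_cell hc k y), withDensity_apply _ hE]
    have hQB := cube_subset_ball a hL k y
    have h1 := hAinf (2 * ρ) (x := y) (r := (n + 1) * (L / 2 ^ k))
      (by have := hside k; positivity) (hEQ.trans hQB) (by
        rw [volume_ball_eq_cube y (hside k), ← hvol k y]
        push_cast
        calc (ρ : ℝ≥0∞) * volume (cell (cubeIdx a L) k y) ≤ ρ * (2 * volume E) := by gcongr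
          _ = 2 * ρ * volume E := by ring)
    calc ∫⁻ z in cell (cubeIdx a L) k y, u z ≤ _ := lintegral_mono_set hQB
      _ ≤ _ := h1
      _ ≤ K * ∫⁻ z in E, u z := by gcongr; exact le_max_right _ _
  have hrh := hmain volume u (cubeIdx a L) hu hc (cubeIdx_coarser a L) hcell0 hcellt hν hpar hhalf
    (ae_le_of_cellAvg_le u hu hut hint a hL) x
  set Q := cell (cubeIdx a L) 0 x with hQ
  set B := ball x r with hB
  have hB0 : volume B ≠ 0 := volume_ball_ne_zero x hr
  have hBt : volume B ≠ ∞ := volume_ball_ne_top x r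
  have hBQ : B ⊆ Q := by
    intro y hy
    funext i
    have hx : cubeIdx a L 0 x i = 0 := by
      simp only [cubeIdx, ha, hL_def, Int.floor_eq_zero_iff, mem_Ico]
      constructor
      · simp; positivity
      · simp only [pow_zero, one_mul]
        rw [div_lt_one hL]; linarith
    rw [hx]
    have hyi : |y i - x i| < r := by
      have h1 : ‖(y - x) i‖ ≤ ‖y - x‖ := PiLp.norm_apply_le (y - x) i
      rw [mem_ball, dist_eq_norm] at hy
      simpa [Real.norm_eq_abs] using h1.trans_lt hy
    rw [abs_lt] at hyi
    simp only [cubeIdx, ha, hL_def, Int.floor_eq_zero_iff, mem_Ico, pow_zero, one_mul]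
    constructor
    · apply div_nonneg <;> linarith
    · rw [div_lt_one hL]; linarith
  have hQB : Q ⊆ ball x ((n + 1) * L) := by
    have := cube_subset_ball a hL 0 x
    rwa [pow_zero, div_one] at this
  have huQ : ∫⁻ y in Q, u y ≤ M₂ * ∫⁻ y in B, u y := by
    refine (lintegral_mono_set hQB).trans ?_
    refine hAinf ((2 * (n + 1)) ^ n) (by positivity) (ball_subset_ball ?_) ?_
    · rw [hL_def]; nlinarith [(Nat.cast_nonneg n : (0 : ℝ) ≤ n)]
    · have e : ((n + 1) * L) ^ n = (2 * (n + 1)) ^ n * r ^ n := by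
        rw [← mul_pow, hL_def]; ring
      have hc2 : ENNReal.ofReal ((2 * ((n : ℝ) + 1)) ^ n) =
          (((2 * ((n : ℝ≥0) + 1)) ^ n : ℝ≥0) : ℝ≥0∞) := by
        rw [← ENNReal.ofReal_coe_nnreal]; simp
      rw [Measure.addHaar_ball_of_pos _ _ (by positivity : 0 < (n + 1 : ℝ) * L),
        Measure.addHaar_ball_of_pos _ _ hr, finrank_euclideanSpace_fin, e,
        ENNReal.ofReal_mul (by positivity), hc2, mul_assoc]
  have hvBQ : volume B ≤ volume Q := measure_mono hBQ
  have hrh' : ∫⁻ y in B, u y ^ (1 + δ) ≤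
      M * ((M₂ * ∫⁻ y in B, u y) / volume B) ^ δ * (M₂ * ∫⁻ y in B, u y) := by
    refine (lintegral_mono_set hBQ).trans (hrh.trans ?_)
    rw [cellAvg, withDensity_apply _ (measurableSet_cell hc 0 x)]
    gcongr
  have h1δ : 0 ≤ 1 + δ := by linarith
  rw [lavg, lavg, ENNReal.div_le_iff hB0 hBt]
  refine hrh'.trans (le_of_eq ?_)
  set U := ∫⁻ y in B, u y
  calc M * ((M₂ * U) / volume B) ^ δ * (M₂ * U)
      = M * ((M₂ * U) / volume B) ^ δ * ((M₂ * U / volume B) * volume B) := by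
        rw [ENNReal.div_mul_cancel hB0 hBt]
    _ = M * ((M₂ * U) / volume B) ^ (1 + δ) * volume B := by
        rw [ENNReal.rpow_add_of_nonneg _ _ zero_le_one hδ.le, ENNReal.rpow_one]; ring
    _ = (M * M₂ ^ (1 + δ) : ℝ≥0) * (U / volume B) ^ (1 + δ) * volume B := by
        rw [mul_div_assoc, ENNReal.mul_rpow_of_nonneg _ _ h1δ,
          ENNReal.coe_mul M (M₂ ^ (1 + δ)),
          ← ENNReal.coe_rpow_of_nonneg _ h1δ]
        ring

end Core

/-! ### Monotonicity and openness of the classes `A_s` and `RH_s` -/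

section Classes
variable {n : ℕ}

lemma lavg_mono_ae {S : Set (En n)} {f g : En n → ℝ≥0∞}
    (h : ∀ᵐ y ∂volume.restrict S, f y ≤ g y) : lavg S f ≤ lavg S g :=
  ENNReal.div_le_div_right (lintegral_mono_ae h) _

lemma lavg_congr_ae {S : Set (En n)} {f g : En n → ℝ≥0∞} (h : f =ᵐ[volume] g) :
    lavg S f = lavg S g := by
  rw [lavg, lavg, lintegral_congr_ae (ae_restrict_of_ae h)]

lemma lavg_const {x : En n} {r : ℝ} (hr : 0 < r) (c : ℝ≥0∞) :
    lavg (ball x r) (fun _ => c) = c := by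
  rw [lavg, setLIntegral_const,
    ENNReal.mul_div_cancel_right (volume_ball_ne_zero x hr) (volume_ball_ne_top x r)]

/-- Monotonicity of the power means. -/
lemma lavg_rpow_mono {f : En n → ℝ≥0∞} (hf : AEMeasurable f) {p q : ℝ} (hp : 0 < p) (hpq : p ≤ q)
    (x : En n) {r : ℝ} (hr : 0 < r) :
    lavg (ball x r) (fun z => f z ^ p) ^ (1 / p) ≤ lavg (ball x r) (fun z => f z ^ q) ^ (1 / q) := by
  set m : Measure (En n) := (volume (ball x r))⁻¹ • volume.restrict (ball x r) with hm
  have hprob : IsProbabilityMeasure m := by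
    constructor
    rw [hm, Measure.smul_apply, Measure.restrict_apply_univ, smul_eq_mul,
      ENNReal.inv_mul_cancel (volume_ball_ne_zero x hr) (volume_ball_ne_top x r)]
  have hfm : AEStronglyMeasurable f m := (hf.restrict.smul_measure _).aestronglyMeasurable
  have h := eLpNorm'_le_eLpNorm'_of_exponent_le hp hpq m hfm
  have e : ∀ g : En n → ℝ≥0∞, ∫⁻ y, g y ∂m = lavg (ball x r) g := fun g => by
    rw [hm, lintegral_smul_measure, smul_eq_mul, lavg, mul_comm, div_eq_mul_inv]
  simpa [eLpNorm'_eq_lintegral_enorm, e] using h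

lemma aemeasurable_weight {w : En n → ℝ} (hw : LocallyIntegrable w volume) :
    AEMeasurable (fun z => ENNReal.ofReal (w z)) :=
  hw.aestronglyMeasurable.aemeasurable.ennreal_ofReal

lemma memA_iff_isA {w : En n → ℝ} {s : ℝ} (hs : 1 < s) :
    MemA w s ↔ IsA (fun z => ENNReal.ofReal (w z)) (s - 1) := by
  have e : 1 - s / (s - 1) = -(s - 1)⁻¹ := by
    have : s - 1 ≠ 0 := by linarith
    field_simp
    ring
  simp only [MemA, IsA, e, hs.ne', hs, false_and, false_or, true_and]

lemma lavg_weight_ne_top {w : En n → ℝ} (hw0 : ∀ x, 0 ≤ w x) (hw : LocallyIntegrable w volume)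
    (x : En n) {r : ℝ} (hr : 0 < r) : lavg (ball x r) (fun z => ENNReal.ofReal (w z)) ≠ ∞ := by
  refine ENNReal.div_ne_top ?_ (volume_ball_ne_zero x hr)
  have h : IntegrableOn w (ball x r) :=
    (hw.integrableOn_isCompact (isCompact_closedBall x r)).mono_set ball_subset_closedBall
  have h2 := h.2
  rw [hasFiniteIntegral_iff_enorm] at h2
  refine ne_top_of_le_ne_top h2.ne (lintegral_mono fun y => ?_)
  rw [Real.enorm_of_nonneg (hw0 y)]

lemma ae_of_ae_balls {P : En n → Prop}
    (h : ∀ k : ℕ, ∀ᵐ y ∂volume.restrict (ball (0 : En n) k), P y) : ∀ᵐ y, P y := by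
  have := (ae_restrict_iUnion_iff (μ := volume) (fun k : ℕ => ball (0 : En n) k) P).2 h
  rwa [iUnion_ball_nat, Measure.restrict_univ] at this

/-- A Muckenhoupt weight either vanishes almost everywhere or is positive almost everywhere. The
degenerate case is allowed by the definitions because `0 * ∞ = 0`. -/
lemma MemA.ae_zero_or_ae_ne_zero {w : En n → ℝ} {s : ℝ} (hw : LocallyIntegrable w volume)
    (hA : MemA w s) :
    (∀ᵐ y, ENNReal.ofReal (w y) = 0) ∨ (∀ᵐ y, ENNReal.ofReal (w y) ≠ 0) := by
  set u : En n → ℝ≥0∞ := fun z => ENNReal.ofReal (w z) with hu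
  have hum : AEMeasurable u := aemeasurable_weight hw
  have hzero : ∀ (x : En n) (r : ℝ), lavg (ball x r) u = 0 →
      ∀ᵐ y ∂volume.restrict (ball x r), u y = 0 := by
    intro x r h
    rw [lavg, ENNReal.div_eq_zero_iff] at h
    exact (lintegral_eq_zero_iff' hum.restrict).1 (h.resolve_right (volume_ball_ne_top x r))
  have hball : ∀ (x : En n) (r : ℝ), 0 < r →
      ¬ (∀ᵐ y ∂volume.restrict (ball x r), u y ≠ 0) →
      ∀ᵐ y ∂volume.restrict (ball x r), u y = 0 := by
    intro x r hr hne
    apply hzero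
    rcases hA with ⟨-, C, hC⟩ | ⟨hs, C, hC⟩
    · by_contra hav
      refine hne ?_
      filter_upwards [hC x r hr] with y hy h0
      have : ENNReal.ofReal (w y) = 0 := h0
      rw [this, mul_zero] at hy
      exact hav (le_zero_iff.1 hy)
    · obtain ⟨C, hC⟩ := (memA_iff_isA hs).1 (Or.inr ⟨hs, C, hC⟩)
      have ht : 0 < s - 1 := by linarith
      have htop : lavg (ball x r) (fun z => u z ^ (-(s - 1)⁻¹)) = ∞ := by
        rw [lavg, ENNReal.div_eq_top]
        refine Or.inr ⟨?_, volume_ball_ne_top x r⟩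
        refine lintegral_eq_top_of_measure_eq_top_ne_zero (hum.restrict.pow_const _) ?_
        intro h0
        refine hne ?_
        rw [ae_iff]
        refine measure_mono_null (fun y hy => ?_) h0
        have hy' : u y = 0 := not_not.1 hy
        change u y ^ (-(s - 1)⁻¹) = ∞
        rw [hy', ENNReal.zero_rpow_of_neg (by have := inv_pos.2 ht; linarith)]
      by_contra hav
      have := hC x r hr
      rw [htop, ENNReal.top_rpow_of_pos ht, ENNReal.mul_top hav] at this
      simp at this
  by_cases hall : ∀ k : ℕ, ∀ᵐ y ∂volume.restrict (ball (0 : En n) k), u y ≠ 0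
  · exact Or.inr (ae_of_ae_balls hall)
  · left
    push Not at hall
    obtain ⟨k₀, hk₀⟩ := hall
    refine ae_of_ae_balls fun k => ?_
    have hle : ball (0 : En n) k ⊆ ball 0 ((k + k₀ : ℕ) + 1 : ℝ) :=
      ball_subset_ball (by push_cast; linarith [(Nat.cast_nonneg k₀ : (0 : ℝ) ≤ k₀)])
    have hle₀ : ball (0 : En n) k₀ ⊆ ball 0 ((k + k₀ : ℕ) + 1 : ℝ) :=
      ball_subset_ball (by push_cast; linarith [(Nat.cast_nonneg k : (0 : ℝ) ≤ k)])
    refine ae_restrict_of_ae_restrict_of_subset hle (hball 0 _ (by positivity) fun hcon => ?_)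
    have h1 := ae_restrict_of_ae_restrict_of_subset hle₀ hcon
    exact hk₀ (h1.mono fun y hy => hy)

lemma memA_of_ae_zero {w : En n → ℝ} (h : ∀ᵐ y, ENNReal.ofReal (w y) = 0) {s : ℝ} (hs : 1 < s) :
    MemA w s := by
  refine Or.inr ⟨hs, 0, fun x r hr => ?_⟩
  rw [lavg_congr_ae (g := fun _ => 0) h, lavg_const hr, zero_mul]
  exact zero_le

lemma memRH_of_ae_zero {w : En n → ℝ} (h : ∀ᵐ y, ENNReal.ofReal (w y) = 0) {s : ℝ} (hs : 0 < s) :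
    MemRH w s := by
  refine ⟨0, fun x r hr => ?_⟩
  have h' : (fun z => ENNReal.ofReal (w z) ^ s) =ᵐ[volume] fun _ => 0 := by
    filter_upwards [h] with y hy
    rw [hy, ENNReal.zero_rpow_of_pos hs]
  rw [lavg_congr_ae h', lavg_const hr, ENNReal.zero_rpow_of_pos (by positivity)]
  exact zero_le

lemma MemA.mono {w : En n → ℝ} (hw0 : ∀ x, 0 ≤ w x) (hw : LocallyIntegrable w volume)
    {s s' : ℝ} (hA : MemA w s) (hss : s ≤ s') : MemA w s' := by
  have hum := aemeasurable_weight hw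
  rcases hss.eq_or_lt with rfl | hlt
  · exact hA
  rcases hA with ⟨rfl, C, hC⟩ | ⟨hs, C, hC⟩
  · rw [memA_iff_isA hlt]
    have ht : 0 < s' - 1 := by linarith
    set t := s' - 1 with ht_def
    refine ⟨C, fun x r hr => ?_⟩
    set a := lavg (ball x r) (fun z => ENNReal.ofReal (w z)) with ha
    rcases eq_or_ne a 0 with ha0 | ha0
    · rw [ha0, zero_mul]; exact zero_le
    have hat : a ≠ ∞ := lavg_weight_ne_top hw0 hw x hr
    have hC0 : (C : ℝ≥0∞) ≠ 0 := by
      intro h0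
      have h1 : ∀ᵐ y ∂volume.restrict (ball x r), False := by
        filter_upwards [hC x r hr] with y hy
        rw [h0, zero_mul] at hy
        exact ha0 (le_zero_iff.1 hy)
      rw [ae_iff] at h1
      simp only [not_false_eq_true, ofPred_true, Measure.restrict_apply_univ] at h1
      exact volume_ball_ne_zero x hr h1
    have hle : lavg (ball x r) (fun z => ENNReal.ofReal (w z) ^ (-t⁻¹)) ≤ (a / C) ^ (-t⁻¹) := by
      rw [← lavg_const (x := x) hr ((a / C) ^ (-t⁻¹))]
      refine lavg_mono_ae ?_
      filter_upwards [hC x r hr] with y hy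
      rw [ENNReal.rpow_neg, ENNReal.rpow_neg, ENNReal.inv_le_inv]
      refine ENNReal.rpow_le_rpow ?_ (inv_pos.2 ht).le
      exact ENNReal.div_le_of_le_mul' hy
    calc a * lavg (ball x r) (fun z => ENNReal.ofReal (w z) ^ (-t⁻¹)) ^ t
        ≤ a * ((a / C) ^ (-t⁻¹)) ^ t := by gcongr
      _ = a * (a / C)⁻¹ := by
        rw [← ENNReal.rpow_mul, neg_mul, inv_mul_cancel₀ ht.ne', ENNReal.rpow_neg_one]
      _ = C := by
        rw [ENNReal.inv_div (Or.inl ENNReal.coe_ne_top) (Or.inl hC0),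
          ENNReal.mul_div_cancel ha0 hat]
  · obtain ⟨C, hC⟩ := (memA_iff_isA hs).1 (Or.inr ⟨hs, C, hC⟩)
    rw [memA_iff_isA (hs.trans hlt)]
    have ht : 0 < s - 1 := by linarith
    have ht' : 0 < s' - 1 := by linarith
    refine ⟨C, fun x r hr => le_trans ?_ (hC x r hr)⟩
    have h := lavg_rpow_mono (f := fun z => (ENNReal.ofReal (w z))⁻¹) hum.inv (inv_pos.2 ht')
      ((inv_le_inv₀ ht' ht).2 (by linarith) : (s' - 1)⁻¹ ≤ (s - 1)⁻¹) x hr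
    simp only [one_div, inv_inv] at h
    simp only [ENNReal.rpow_neg, ← ENNReal.inv_rpow]
    gcongr

lemma MemRH.mono {w : En n → ℝ} (hw : LocallyIntegrable w volume) {s s' : ℝ} (hs' : 0 < s')
    (hss : s' ≤ s) (h : MemRH w s) : MemRH w s' := by
  obtain ⟨C, hC⟩ := h
  exact ⟨C, fun x r hr => (lavg_rpow_mono (aemeasurable_weight hw) hs' hss x hr).trans (hC x r hr)⟩

lemma MemRHe.memRH_of_lt {w : En n → ℝ} (hw : LocallyIntegrable w volume) {s : ℝ} {t : ℝ≥0∞}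
    (hs : 0 < s) (hst : ENNReal.ofReal s < t) (h : MemRHe w t) : MemRH w s := by
  rcases h with ⟨-, C, hC⟩ | ⟨ht, h⟩
  · refine ⟨C, fun x r hr => ?_⟩
    set a := lavg (ball x r) (fun z => ENNReal.ofReal (w z))
    have hle : lavg (ball x r) (fun z => ENNReal.ofReal (w z) ^ s) ≤ (C * a) ^ s := by
      rw [← lavg_const (x := x) hr ((C * a) ^ s)]
      refine lavg_mono_ae ?_
      filter_upwards [hC x r hr] with y hy
      exact ENNReal.rpow_le_rpow hy hs.le
    calc _ ≤ ((C * a) ^ s) ^ (1 / s) := by gcongr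
      _ = C * a := by rw [← ENNReal.rpow_mul, mul_one_div_cancel hs.ne', ENNReal.rpow_one]
  · exact h.mono hw hs ((ENNReal.ofReal_le_iff_le_toReal ht).1 hst.le)

/-- Openness of the `A_s` condition: the dual weight `w ^ (-1 / (s - 1))` is a Muckenhoupt weight,
and its reverse Hölder inequality lowers the exponent `s`. -/
lemma MemA.exists_lt {w : En n → ℝ} (hw : LocallyIntegrable w volume)
    {s : ℝ} (hs : 1 < s) (hA : MemA w s) : ∃ s', 1 < s' ∧ s' < s ∧ MemA w s' := by
  rcases hA.ae_zero_or_ae_ne_zero hw with h0 | hne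
  · exact ⟨(1 + s) / 2, by linarith, by linarith, memA_of_ae_zero h0 (by linarith)⟩
  set u : En n → ℝ≥0∞ := fun z => ENNReal.ofReal (w z) with hu
  have hum : AEMeasurable u := aemeasurable_weight hw
  rw [memA_iff_isA hs] at hA
  have ht : 0 < s - 1 := by linarith
  set t := s - 1 with ht_def
  obtain ⟨C, hC⟩ := hA
  set σ : En n → ℝ≥0∞ := fun z => u z ^ (-t⁻¹) with hσ
  have hσm : AEMeasurable σ := hum.pow_const _
  have hti : 0 < t⁻¹ := inv_pos.2 ht
  have hσA : IsA σ t⁻¹ := by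
    refine ⟨C ^ t⁻¹, fun x r hr => ?_⟩
    have e : (fun z => σ z ^ (-(t⁻¹)⁻¹)) = u := by
      funext z
      rw [hσ, ← ENNReal.rpow_mul, inv_inv, neg_mul_neg, inv_mul_cancel₀ ht.ne', ENNReal.rpow_one]
    rw [e]
    calc lavg (ball x r) σ * lavg (ball x r) u ^ t⁻¹
        = (lavg (ball x r) u * lavg (ball x r) σ ^ t) ^ t⁻¹ := by
          rw [ENNReal.mul_rpow_of_nonneg _ _ hti.le, ← ENNReal.rpow_mul, mul_inv_cancel₀ ht.ne',
            ENNReal.rpow_one, mul_comm]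
      _ ≤ (C : ℝ≥0∞) ^ t⁻¹ := by gcongr; exact hC x r hr
      _ = _ := (ENNReal.coe_rpow_of_nonneg _ hti.le).symm
  have hσ0 : ∀ᵐ y, σ y ≠ 0 := Filter.Eventually.of_forall fun y => by
    rw [hσ, Ne, ENNReal.rpow_eq_zero_iff, not_or]
    exact ⟨fun h => by linarith [h.2], fun h => ENNReal.ofReal_ne_top h.1⟩
  have hσt : ∀ᵐ y, σ y ≠ ∞ := by
    filter_upwards [hne] with y hy
    rw [hσ, Ne, ENNReal.rpow_eq_top_iff, not_or]
    exact ⟨fun h => hy h.1, fun h => ENNReal.ofReal_ne_top h.1⟩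
  obtain ⟨δ, M, hδ, hM⟩ := hσA.reverseHolder hti hσm hσ0 hσt
  have h1δ : 0 < 1 + δ := by linarith
  have ht' : 0 < t / (1 + δ) := by positivity
  have htt : t / (1 + δ) < t := div_lt_self ht (by linarith)
  refine ⟨1 + t / (1 + δ), by linarith, by linarith, ?_⟩
  rw [memA_iff_isA (by linarith), add_sub_cancel_left]
  refine ⟨M ^ (t / (1 + δ)) * C, fun x r hr => ?_⟩
  have e : (fun z => u z ^ (-(t / (1 + δ))⁻¹)) = fun z => σ z ^ (1 + δ) := by
    funext z
    rw [hσ, ← ENNReal.rpow_mul]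
    congr 1
    field_simp
  change lavg (ball x r) u * lavg (ball x r) (fun z => u z ^ (-(t / (1 + δ))⁻¹)) ^ (t / (1 + δ)) ≤ _
  rw [e]
  calc lavg (ball x r) u * lavg (ball x r) (fun z => σ z ^ (1 + δ)) ^ (t / (1 + δ))
      ≤ lavg (ball x r) u * (M * lavg (ball x r) σ ^ (1 + δ)) ^ (t / (1 + δ)) := by
        gcongr; exact hM x r hr
    _ = M ^ (t / (1 + δ)) * (lavg (ball x r) u * lavg (ball x r) σ ^ t) := by
        rw [ENNReal.mul_rpow_of_nonneg _ _ ht'.le, ← ENNReal.rpow_mul, mul_div_cancel₀ _ h1δ.ne']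
        ring
    _ ≤ M ^ (t / (1 + δ)) * C := by gcongr; exact hC x r hr
    _ = _ := by rw [ENNReal.coe_mul, ENNReal.coe_rpow_of_nonneg _ ht'.le]

/-- Openness of the reverse Hölder condition: if `w ∈ A_p ∩ RH_s` then `w ^ s` is again a
Muckenhoupt weight, so it satisfies a reverse Hölder inequality of its own. -/
lemma MemRH.exists_gt {w : En n → ℝ} (hw0 : ∀ x, 0 ≤ w x) (hw : LocallyIntegrable w volume)
    {p s : ℝ} (hA : MemA w p) (hs : 1 < s) (hRH : MemRH w s) : ∃ s', s < s' ∧ MemRH w s' := by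
  rcases hA.ae_zero_or_ae_ne_zero hw with h0 | hne
  · exact ⟨s + 1, by linarith, memRH_of_ae_zero h0 (by linarith)⟩
  have hs0 : 0 < s := by linarith
  set u : En n → ℝ≥0∞ := fun z => ENNReal.ofReal (w z) with hu
  have hum : AEMeasurable u := aemeasurable_weight hw
  have hA2 := hA.mono hw0 hw (le_max_left p 2)
  have h2 : (2 : ℝ) ≤ max p 2 := le_max_right p 2
  rw [memA_iff_isA (by linarith)] at hA2
  have ht : 0 < max p 2 - 1 := by linarith
  set t := max p 2 - 1 with ht_def
  obtain ⟨C, hC⟩ := hA2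
  obtain ⟨C₁, hC₁⟩ := hRH
  have hst : 0 < s * t := by positivity
  set v : En n → ℝ≥0∞ := fun z => u z ^ s with hv
  have hvavg : ∀ (x : En n) (r : ℝ), 0 < r →
      lavg (ball x r) v ≤ (C₁ * lavg (ball x r) u) ^ s := fun x r hr => by
    have := ENNReal.rpow_le_rpow (hC₁ x r hr) hs0.le
    rwa [← ENNReal.rpow_mul, one_div_mul_cancel hs0.ne', ENNReal.rpow_one] at this
  have hvA : IsA v (s * t) := by
    refine ⟨(C₁ * C) ^ s, fun x r hr => ?_⟩
    have e : (fun z => v z ^ (-(s * t)⁻¹)) = fun z => u z ^ (-t⁻¹) := by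
      funext z
      rw [hv, ← ENNReal.rpow_mul]
      congr 1
      field_simp
    rw [e]
    calc lavg (ball x r) v * lavg (ball x r) (fun z => u z ^ (-t⁻¹)) ^ (s * t)
        ≤ (C₁ * lavg (ball x r) u) ^ s *
            lavg (ball x r) (fun z => u z ^ (-t⁻¹)) ^ (s * t) := by
          gcongr; exact hvavg x r hr
      _ = (C₁ * (lavg (ball x r) u * lavg (ball x r) (fun z => u z ^ (-t⁻¹)) ^ t)) ^ s := by
          rw [mul_comm s t, ENNReal.rpow_mul, ← ENNReal.mul_rpow_of_nonneg _ _ hs0.le, mul_assoc]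
      _ ≤ (C₁ * C) ^ s := by gcongr; exact hC x r hr
      _ = _ := by rw [← ENNReal.coe_mul, ENNReal.coe_rpow_of_nonneg _ hs0.le]
  have hv0 : ∀ᵐ y, v y ≠ 0 := by
    filter_upwards [hne] with y hy
    exact (ENNReal.rpow_pos (pos_iff_ne_zero.2 hy) ENNReal.ofReal_ne_top).ne'
  have hvt : ∀ᵐ y, v y ≠ ∞ := Filter.Eventually.of_forall fun y =>
    ENNReal.rpow_ne_top_of_nonneg hs0.le ENNReal.ofReal_ne_top
  obtain ⟨δ, M, hδ, hM⟩ := hvA.reverseHolder hst (hum.pow_const _) hv0 hvt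
  have hs' : 0 < s * (1 + δ) := by positivity
  refine ⟨s * (1 + δ), by nlinarith, M ^ (1 / (s * (1 + δ))) * C₁, fun x r hr => ?_⟩
  have e : (fun z => u z ^ (s * (1 + δ))) = fun z => v z ^ (1 + δ) := by
    funext z
    rw [hv, ← ENNReal.rpow_mul]
  change lavg (ball x r) (fun z => u z ^ (s * (1 + δ))) ^ (1 / (s * (1 + δ))) ≤
    _ * lavg (ball x r) u
  rw [e]
  have hpos : 0 < 1 / (s * (1 + δ)) := by positivity
  calc lavg (ball x r) (fun z => v z ^ (1 + δ)) ^ (1 / (s * (1 + δ)))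
      ≤ (M * ((C₁ * lavg (ball x r) u) ^ s) ^ (1 + δ)) ^ (1 / (s * (1 + δ))) := by
        gcongr
        refine (hM x r hr).trans ?_
        gcongr
        exact hvavg x r hr
    _ = M ^ (1 / (s * (1 + δ))) * (C₁ * lavg (ball x r) u) := by
        rw [ENNReal.mul_rpow_of_nonneg _ _ hpos.le, ← ENNReal.rpow_mul, ← ENNReal.rpow_mul,
          ← mul_assoc s, mul_one_div_cancel hs'.ne', ENNReal.rpow_one]
    _ = _ := by rw [ENNReal.coe_mul, ENNReal.coe_rpow_of_nonneg _ hpos.le, mul_assoc]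

/-- For finite `q₀ = Q`, the upper endpoint condition `p < Q / (s_w)'` says that the reverse
Hölder exponent `(Q / p)' = Q / (Q - p)` lies below `s_w`. -/
lemma lt_div_sWconj_iff {w : En n → ℝ} {p Q : ℝ} (hp : 0 < p) (hsW : 1 < sW w) :
    ENNReal.ofReal p < ENNReal.ofReal Q / sWconj w ↔
      p < Q ∧ ENNReal.ofReal ((Q / p) / (Q / p - 1)) < sW w := by
  by_cases htop : sW w = ∞
  · rw [sWconj, if_pos htop, htop, div_one, ENNReal.ofReal_lt_ofReal_iff']
    constructor
    · exact fun h => ⟨h.1, ENNReal.ofReal_lt_top⟩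
    · exact fun h => ⟨h.1, hp.trans h.1⟩
  · rw [sWconj, if_neg htop]
    set S := (sW w).toReal with hS
    have hsW' : sW w = ENNReal.ofReal S := (ENNReal.ofReal_toReal htop).symm
    have hS1 : 1 < S := by
      rw [hsW', ← ENNReal.ofReal_one] at hsW
      exact (ENNReal.ofReal_lt_ofReal_iff'.1 hsW).1
    have hS1' : 0 < S - 1 := by linarith
    have hS0 : 0 < S := by linarith
    rw [hsW', ← ENNReal.ofReal_div_of_pos (by positivity), ENNReal.ofReal_lt_ofReal_iff',
      ENNReal.ofReal_lt_ofReal_iff']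
    have e1 : Q / (S / (S - 1)) = Q * (S - 1) / S := by field_simp
    rw [e1, lt_div_iff₀ hS0]
    have e2 : p < Q → (Q / p) / (Q / p - 1) = Q / (Q - p) := fun h => by
      have : Q - p ≠ 0 := by linarith
      rw [div_sub_one hp.ne', div_div_div_cancel_right₀ hp.ne']
    constructor
    · rintro ⟨h1, h2⟩
      have hQ : 0 < Q := by
        by_contra hQ
        push Not at hQ
        have : Q * (S - 1) ≤ 0 := mul_nonpos_of_nonpos_of_nonneg hQ hS1'.le
        nlinarith [mul_pos hp hS0]
      have hpQ : p < Q := by nlinarith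
      rw [e2 hpQ, div_lt_iff₀ (by linarith)]
      exact ⟨hpQ, by linarith, hS0⟩
    · rintro ⟨hpQ, h1, -⟩
      rw [e2 hpQ, div_lt_iff₀ (by linarith)] at h1
      have hQ : 0 < Q := hp.trans hpQ
      exact ⟨by linarith, by positivity⟩

lemma one_lt_conj {p Q : ℝ} (hp : 0 < p) (hpQ : p < Q) : 1 < (Q / p) / (Q / p - 1) := by
  have h : 1 < Q / p := (one_lt_div hp).2 hpQ
  rw [one_lt_div (by linarith)]
  linarith

lemma le_sW {w : En n → ℝ} {s : ℝ} (hs : 1 < s) (h : MemRH w s) : ENNReal.ofReal s ≤ sW w := by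
  refine le_sSup ⟨by rwa [← ENNReal.ofReal_one, ENNReal.ofReal_lt_ofReal_iff (by linarith)],
    Or.inr ⟨ENNReal.ofReal_ne_top, ?_⟩⟩
  rwa [ENNReal.toReal_ofReal (by linarith)]

end Classes

/-- if nonempty, `W_w(p₀,q₀)` is exactly the open interval
`(p₀ r_w , q₀/(s_w)')`. -/
theorem statement9
    (n : ℕ) (w : En n → ℝ) (hw0 : ∀ x, 0 ≤ w x) (hwloc : LocallyIntegrable w volume)
    -- w ∈ A_∞
    (hwAinf : ∃ p : ℝ, 1 ≤ p ∧ MemA w p)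
    (p₀ : ℝ) (q₀ : ℝ≥0∞) (hp₀ : 1 ≤ p₀) (hp₀q₀ : ENNReal.ofReal p₀ < q₀)
    (hne : (Wset w p₀ q₀).Nonempty) :
    Wset w p₀ q₀ = {p : ℝ | p₀ * rW w < p ∧ ENNReal.ofReal p < q₀ / sWconj w} := by
  have hp₀' : 0 < p₀ := by linarith
  have hbdd : BddBelow {r : ℝ | 1 ≤ r ∧ MemA w r} := ⟨1, fun r hr => hr.1⟩
  have hrne : {r : ℝ | 1 ≤ r ∧ MemA w r}.Nonempty := hwAinf
  have hr1 : 1 ≤ rW w := le_csInf hrne fun r hr => hr.1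
  -- the lower endpoint
  have hlow : ∀ p, (p₀ < p ∧ MemA w (p / p₀)) ↔ p₀ * rW w < p := by
    intro p
    rw [mul_comm, ← lt_div_iff₀ hp₀']
    constructor
    · rintro ⟨hp, hA⟩
      obtain ⟨s', h1, h2, h3⟩ := hA.exists_lt hwloc ((one_lt_div hp₀').2 hp)
      exact (csInf_le hbdd ⟨h1.le, h3⟩).trans_lt h2
    · intro h
      refine ⟨(one_lt_div hp₀').1 (hr1.trans_lt h), ?_⟩
      obtain ⟨r, ⟨-, hr⟩, hlt⟩ := exists_lt_of_csInf_lt hrne h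
      exact hr.mono hw0 hwloc hlt.le
  -- the upper endpoint
  have hup : ∀ p, p₀ < p → ((ENNReal.ofReal p < q₀ ∧
      (q₀ ≠ ∞ → MemRH w ((q₀.toReal / p) / (q₀.toReal / p - 1)))) ↔
      ENNReal.ofReal p < q₀ / sWconj w) := by
    intro p hpp
    have hp : 0 < p := hp₀'.trans hpp
    by_cases hq : q₀ = ∞
    · have hc : sWconj w ≠ ∞ := by
        rw [sWconj]
        split_ifs
        · exact ENNReal.one_ne_top
        · exact ENNReal.ofReal_ne_top
      rw [hq, ENNReal.top_div_of_ne_top hc]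
      simp
    set Q := q₀.toReal with hQ
    have hqQ : q₀ = ENNReal.ofReal Q := (ENNReal.ofReal_toReal hq).symm
    have hltQ : ∀ {p' : ℝ}, 0 < p' → (ENNReal.ofReal p' < q₀ ↔ p' < Q) := fun hp' => by
      rw [hqQ, ENNReal.ofReal_lt_ofReal_iff']
      exact ⟨fun h => h.1, fun h => ⟨h, hp'.trans h⟩⟩
    have hsW : 1 < sW w := by
      obtain ⟨p₁, hp₁, hp₁q, -, hRH⟩ := hne
      have hp₁' : 0 < p₁ := hp₀'.trans hp₁
      have h1 := one_lt_conj hp₁' ((hltQ hp₁').1 hp₁q)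
      refine lt_of_lt_of_le ?_ (le_sW h1 (hRH hq))
      rwa [← ENNReal.ofReal_one, ENNReal.ofReal_lt_ofReal_iff (by linarith)]
    rw [hltQ hp]
    conv_rhs => rw [hqQ, lt_div_sWconj_iff hp hsW]
    refine and_congr_right fun hpQ => ?_
    have h1 := one_lt_conj hp hpQ
    constructor
    · intro h
      obtain ⟨p₂, -, hA⟩ := hwAinf
      obtain ⟨s', hs', hRH'⟩ := (h hq).exists_gt hw0 hwloc hA h1
      refine lt_of_lt_of_le ?_ (le_sW (h1.trans hs') hRH')
      exact (ENNReal.ofReal_lt_ofReal_iff (by linarith)).2 hs'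
    · intro h _
      obtain ⟨t, ⟨-, ht⟩, hlt⟩ := lt_sSup_iff.1 h
      exact ht.memRH_of_lt hwloc (by linarith) hlt
  ext p
  constructor
  · rintro ⟨h1, h2, h3, h4⟩
    exact ⟨(hlow p).1 ⟨h1, h3⟩, (hup p h1).1 ⟨h2, h4⟩⟩
  · rintro ⟨h1, h2⟩
    obtain ⟨h3, h4⟩ := (hlow p).2 h1
    obtain ⟨h5, h6⟩ := (hup p h3).2 h2
    exact ⟨h3, h5, h4, h6⟩

end
end
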